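/- arXiv:1612.08476 — 14 statements merged into one kernel-verified Lean document; each statement's English description precedes it below -/
import Mathlib

section
/- Let (E, A, ⟨·,·⟩_A) be a full basic triple and (F, B, ⟨·,·⟩_B) a basic triple such that F with its associated ternary product is an admissible *-tring and F is a faithful B-module. If φ : E → F is a homomorphism between the associated *-trings, then there exists a unique *-algebra homomorphism ψ : A → B such that ψ(⟨x,y⟩_A) = ⟨φ(x),φ(y)⟩_B for all x,y ∈ E. Moreover φ(xa) = φ(x)ψ(a) for all x ∈ E, a ∈ A, and ker ψ ⊆ {a ∈ A : φ(xa) = 0 for all x ∈ E} ⊆ {a ∈ A : ψ(a)*ψ(a) = 0}, both inclusions being equalities when B is admissible as a *-algebra. If in addition E is a faithful A-module and φ is injective, then ψ is injective. -/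
noncomputable section

open scoped ComplexConjugate

/-- The axioms of a `*`-ternary ring (`*`-tring) structure on a complex vector
space: `μ` is linear in the odd variables, conjugate-linear in the middle one,
and satisfies the ternary associativity identities. -/
def IsTernaryProduct {E : Type*} [AddCommGroup E] [Module ℂ E]
    (μ : E → E → E → E) : Prop :=
  (∀ x x' y z : E, μ (x + x') y z = μ x y z + μ x' y z) ∧
  (∀ (c : ℂ) (x y z : E), μ (c • x) y z = c • μ x y z) ∧
  (∀ x y y' z : E, μ x (y + y') z = μ x y z + μ x y' z) ∧
  (∀ (c : ℂ) (x y z : E), μ x (c • y) z = conj c • μ x y z) ∧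
  (∀ x y z z' : E, μ x y (z + z') = μ x y z + μ x y z') ∧
  (∀ (c : ℂ) (x y z : E), μ x y (c • z) = c • μ x y z) ∧
  (∀ x y z u v : E, μ (μ x y z) u v = μ x (μ u z y) v) ∧
  (∀ x y z u v : E, μ x (μ u z y) v = μ x y (μ z u v))

/-- A (right) basic triple `(E, A, ⟪·,·⟫)`: a right module `E` over a complex
`*`-algebra `A`, together with an `A`-valued pairing which is conjugate-linear
in the first variable and linear in the second one, compatible with the module
structure and the involution. -/
structure BasicTriple (E A : Type*) [AddCommGroup E] [Module ℂ E]
    [NonUnitalRing A] [Module ℂ A] [StarRing A] where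
  act : E → A → E
  inner : E → E → A
  act_add_left : ∀ (x y : E) (a : A), act (x + y) a = act x a + act y a
  act_add_right : ∀ (x : E) (a b : A), act x (a + b) = act x a + act x b
  act_smul_left : ∀ (c : ℂ) (x : E) (a : A), act (c • x) a = c • act x a
  act_smul_right : ∀ (c : ℂ) (x : E) (a : A), act x (c • a) = c • act x a
  act_mul : ∀ (x : E) (a b : A), act (act x a) b = act x (a * b)
  inner_add_left : ∀ x y z : E, inner (x + y) z = inner x z + inner y z
  inner_add_right : ∀ x y z : E, inner x (y + z) = inner x y + inner x z
  inner_smul_left : ∀ (c : ℂ) (x y : E), inner (c • x) y = conj c • inner x y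
  inner_smul_right : ∀ (c : ℂ) (x y : E), inner x (c • y) = c • inner x y
  inner_mul : ∀ (x y : E) (a : A), inner x y * a = inner x (act y a)
  star_inner : ∀ x y : E, star (inner x y) = inner y x

variable {E A : Type*} [AddCommGroup E] [Module ℂ E]
    [NonUnitalRing A] [Module ℂ A] [StarRing A]

/-- The ternary product associated with a basic triple: `μ(x,y,z) = x⟪y,z⟫`. -/
def BasicTriple.mu (t : BasicTriple E A) (x y z : E) : E := t.act x (t.inner y z)

/-- The basic triple is full: `A = span{⟪x,y⟫ : x, y ∈ E}`. -/
def BasicTriple.Full (t : BasicTriple E A) : Prop :=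
  Submodule.span ℂ {a : A | ∃ x y : E, t.inner x y = a} = ⊤

/-- `E` is a faithful `A`-module. -/
def BasicTriple.Faithful (t : BasicTriple E A) : Prop :=
  ∀ a : A, (∀ x : E, t.act x a = 0) → a = 0

/-- Let `(E, A, ⟪·,·⟫_A)` be a full basic triple and
`(F, B, ⟪·,·⟫_B)` a basic triple such that `F` with its associated ternary
product is an admissible `*`-tring and `F` is a faithful `B`-module.  If
`φ : E → F` is a homomorphism between the associated `*`-trings, then there is
a unique `*`-algebra homomorphism `ψ : A → B` with
`ψ⟪x,y⟫_A = ⟪φ x, φ y⟫_B`; moreover `φ(xa) = φ(x)ψ(a)`, and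
`ker ψ ⊆ {a : ∀ x, φ(xa) = 0} ⊆ {a : ψ(a)*ψ(a) = 0}`, with equalities when `B`
is admissible; and if `E` is faithful and `φ` injective, then `ψ` is
injective. -/
theorem stmt_1 {E A F B : Type*} [AddCommGroup E] [Module ℂ E]
    [NonUnitalRing A] [Module ℂ A] [StarRing A] [StarModule ℂ A]
    [IsScalarTower ℂ A A] [SMulCommClass ℂ A A]
    [AddCommGroup F] [Module ℂ F]
    [NonUnitalRing B] [Module ℂ B] [StarRing B] [StarModule ℂ B]
    [IsScalarTower ℂ B B] [SMulCommClass ℂ B B]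
    (t : BasicTriple E A) (s : BasicTriple F B)
    (htfull : t.Full)
    (hFadm : ∀ y : F, s.mu y y y = 0 → y = 0)
    (hFfaith : s.Faithful)
    (φ : E →ₗ[ℂ] F)
    (hφ : ∀ x y z : E, φ (t.mu x y z) = s.mu (φ x) (φ y) (φ z)) :
    ∃ ψ : A →⋆ₙₐ[ℂ] B,
      (∀ x y : E, ψ (t.inner x y) = s.inner (φ x) (φ y)) ∧
      (∀ ψ' : A →⋆ₙₐ[ℂ] B,
        (∀ x y : E, ψ' (t.inner x y) = s.inner (φ x) (φ y)) → ψ' = ψ) ∧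
      (∀ (x : E) (a : A), φ (t.act x a) = s.act (φ x) (ψ a)) ∧
      ({a : A | ψ a = 0} ⊆ {a : A | ∀ x : E, φ (t.act x a) = 0}) ∧
      ({a : A | ∀ x : E, φ (t.act x a) = 0} ⊆ {a : A | star (ψ a) * ψ a = 0}) ∧
      ((∀ b : B, star b * b = 0 → b = 0) →
        {a : A | ψ a = 0} = {a : A | ∀ x : E, φ (t.act x a) = 0} ∧
        {a : A | ∀ x : E, φ (t.act x a) = 0} = {a : A | star (ψ a) * ψ a = 0}) ∧
      (t.Faithful → Function.Injective φ → Function.Injective ψ) := by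
  classical
  have a0 : ∀ x : F, s.act x 0 = 0 := fun x => by
    simpa using s.act_smul_right 0 x 0
  have a0E : ∀ x : E, t.act x 0 = 0 := fun x => by
    simpa using t.act_smul_right 0 x 0
  have i0 : ∀ x : F, s.inner x 0 = 0 := fun x => by
    simpa using s.inner_smul_right 0 x 0
  have iact : ∀ (x y : F) (b : B), s.inner (s.act x b) y = star b * s.inner x y := by
    intro x y b
    rw [← s.star_inner, ← s.inner_mul, star_mul, s.star_inner]
  let S : Submodule ℂ (A × B) := Submodule.span ℂ
    {p | ∃ x y : E, p = (t.inner x y, s.inner (φ x) (φ y))}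
  have hgen : ∀ x y : E, (t.inner x y, s.inner (φ x) (φ y)) ∈ S := fun x y =>
    Submodule.subset_span ⟨x, y, rfl⟩
  have hact : ∀ p ∈ S, ∀ x : E, φ (t.act x p.1) = s.act (φ x) p.2 := by
    intro p hp
    induction hp using Submodule.span_induction with
    | mem p h => obtain ⟨u, v, rfl⟩ := h; intro x; exact hφ x u v
    | zero => intro x; simp [a0, a0E]
    | add p q _ _ hp hq =>
      intro x; simp only [Prod.fst_add, Prod.snd_add, t.act_add_right, s.act_add_right, map_add, hp, hq]
    | smul c p _ hp =>
      intro x; simp only [Prod.smul_fst, Prod.smul_snd, t.act_smul_right, s.act_smul_right, map_smul, hp]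
  have hstar : ∀ p ∈ S, (star p.1, star p.2) ∈ S := by
    intro p hp
    induction hp using Submodule.span_induction with
    | mem p h =>
      obtain ⟨u, v, rfl⟩ := h
      simp only [t.star_inner, s.star_inner]; exact hgen v u
    | zero => simp only [Prod.fst_zero, Prod.snd_zero, star_zero, zero_mul]; exact S.zero_mem
    | add p q _ _ hp hq => simpa using S.add_mem hp hq
    | smul c p _ hp => simpa using S.smul_mem (star c) hp
  have hmul : ∀ q ∈ S, ∀ p ∈ S, (p.1 * q.1, p.2 * q.2) ∈ S := by
    intro q hq p hp
    induction hp using Submodule.span_induction with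
    | mem p h =>
      obtain ⟨u, v, rfl⟩ := h
      simp only [t.inner_mul, s.inner_mul, ← hact q hq]; exact hgen _ _
    | zero => simp only [Prod.fst_zero, Prod.snd_zero, star_zero, zero_mul]; exact S.zero_mem
    | add p r _ _ hp hr => simpa [add_mul] using S.add_mem hp hr
    | smul c p _ hp => simpa [smul_mul_assoc] using S.smul_mem c hp
  have hann : ∀ b : B, (∀ x : E, s.act (φ x) b = 0) → ∀ p ∈ S, p.2 * b = 0 := by
    intro b hb p hp
    induction hp using Submodule.span_induction with
    | mem p h => obtain ⟨u, v, rfl⟩ := h; simp only [s.inner_mul, hb, i0]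
    | zero => simp
    | add p r _ _ hp hr => simp [add_mul, hp, hr]
    | smul c p _ hp => simp [smul_mul_assoc, hp]
  have hzero : ∀ b : B, ((0 : A), b) ∈ S → b = 0 := by
    intro b hb
    have h2 := hstar _ hb
    simp only [star_zero] at h2
    have h1 : b * star b = 0 := by
      refine hann (star b) (fun x => ?_) _ hb
      have := hact _ h2 x
      simpa [a0E] using this.symm
    apply hFfaith
    intro f
    apply hFadm
    unfold BasicTriple.mu
    rw [s.act_mul, iact, ← mul_assoc b, h1, zero_mul, a0]
  have hfun : ∀ a b c, (a, b) ∈ S → (a, c) ∈ S → b = c := by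
    intro a b c hb hc
    have := S.sub_mem hb hc
    simp only [Prod.mk_sub_mk, sub_self] at this
    exact sub_eq_zero.1 (hzero _ this)
  have hex : ∀ a : A, ∃ b : B, (a, b) ∈ S := by
    intro a
    have ha : a ∈ Submodule.span ℂ {a : A | ∃ x y : E, t.inner x y = a} := by
      rw [show Submodule.span ℂ {a : A | ∃ x y : E, t.inner x y = a} = ⊤ from htfull]; trivial
    induction ha using Submodule.span_induction with
    | mem p h => obtain ⟨u, v, rfl⟩ := h; exact ⟨_, hgen u v⟩
    | zero => exact ⟨0, S.zero_mem⟩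
    | add p r _ _ hp hr =>
      obtain ⟨b, hb⟩ := hp
      obtain ⟨c, hc⟩ := hr
      exact ⟨b + c, S.add_mem hb hc⟩
    | smul c p _ hp =>
      obtain ⟨b, hb⟩ := hp
      exact ⟨c • b, S.smul_mem c hb⟩
  choose g hg using hex
  let ψ : A →⋆ₙₐ[ℂ] B :=
    { toFun := g
      map_smul' := fun c a => hfun _ _ _ (hg _) (S.smul_mem c (hg a))
      map_zero' := hfun _ _ _ (hg _) S.zero_mem
      map_add' := fun a b => hfun _ _ _ (hg _) (S.add_mem (hg a) (hg b))
      map_mul' := fun a b => hfun _ _ _ (hg _) (hmul _ (hg b) _ (hg a))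
      map_star' := fun a => hfun _ _ _ (hg _) (hstar _ (hg a)) }
  have hψ : ∀ a, (a, ψ a) ∈ S := hg
  have c1 : ∀ x y : E, ψ (t.inner x y) = s.inner (φ x) (φ y) := fun x y =>
    hfun _ _ _ (hψ _) (hgen x y)
  have c3 : ∀ (x : E) (a : A), φ (t.act x a) = s.act (φ x) (ψ a) := fun x a =>
    hact _ (hψ a) x
  have c4 : ∀ a, ψ a = 0 → ∀ x : E, φ (t.act x a) = 0 := by
    intro a ha x
    rw [c3, ha, a0]
  have c5 : ∀ a, (∀ x : E, φ (t.act x a) = 0) → star (ψ a) * ψ a = 0 := by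
    intro a ha
    exact hann (ψ a) (fun x => by rw [← c3, ha]) _ (hstar _ (hψ a))
  refine ⟨ψ, c1, ?_, c3, c4, c5, ?_, ?_⟩
  · intro ψ' h'
    have key : ∀ p ∈ S, ψ' p.1 = p.2 := by
      intro p hp
      induction hp using Submodule.span_induction with
      | mem p h => obtain ⟨u, v, rfl⟩ := h; exact h' u v
      | zero => simp
      | add p r _ _ hp hr => simp [hp, hr]
      | smul c p _ hp => simp [hp]
    ext a
    exact key _ (hψ a)
  · intro hB
    exact ⟨Set.Subset.antisymm c4 (fun a ha => hB _ (c5 a ha)),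
      Set.Subset.antisymm c5 (fun a ha => c4 a (hB _ ha))⟩
  · intro hE hinj
    rw [injective_iff_map_eq_zero]
    intro a ha
    apply hE
    intro x
    apply hinj
    rw [c4 a ha x, map_zero]
end
end

section
/- Let E be an admissible *-tring. Then the map T ↦ T* on L_l(E) is a conjugate-linear, antimultiplicative involution satisfying T** = T, making L_l(E) a *-algebra; L_l(E) is admissible as a *-algebra, i.e., T*T = 0 implies T = 0; and span{θ_{y,z} : y,z ∈ E} is a two-sided ideal of L_l(E) which is essential in the sense that if Tθ_{y,z} = 0 for all y,z ∈ E, or θ_{y,z}T = 0 for all y,z ∈ E, then T = 0. -/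
noncomputable section

open scoped ComplexConjugate

/-- `S` is a left adjoint of `T` with respect to the ternary product `μ`:
`μ(x, Ty, z) = μ(Sx, y, z)` for all `x, y, z`.  For an admissible `*`-tring such
an `S` is unique and is denoted `T*`. -/
def IsAdj {E : Type*} [AddCommGroup E] [Module ℂ E] (μ : E → E → E → E)
    (T S : Module.End ℂ E) : Prop :=
  ∀ x y z : E, μ x (T y) z = μ (S x) y z

/-- The endomorphism `θ_{y,z} : x ↦ μ(x,y,z)`. -/
def theta {E : Type*} [AddCommGroup E] [Module ℂ E] {μ : E → E → E → E}
    (h : IsTernaryProduct μ) (y z : E) : Module.End ℂ E where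
  toFun x := μ x y z
  map_add' a b := h.1 a b y z
  map_smul' c a := h.2.1 c a y z

/-- Let `E` be an admissible `*`-tring.  Then taking adjoints
is a (well-defined) conjugate-linear antimultiplicative involution on the
algebra `L_l(E)` of left-adjointable endomorphisms, `L_l(E)` is admissible
(`T*T = 0 → T = 0`), and `span{θ_{y,z}}` is a two-sided essential ideal of
`L_l(E)`. -/
theorem stmt_2 {E : Type*} [AddCommGroup E] [Module ℂ E] (μ : E → E → E → E)
    (h : IsTernaryProduct μ) (hadm : ∀ x : E, μ x x x = 0 → x = 0) :
    -- the adjoint is unique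
    (∀ T S S' : Module.End ℂ E, IsAdj μ T S → IsAdj μ T S' → S = S') ∧
    -- the adjoint map is conjugate-linear
    (∀ T T' S S' : Module.End ℂ E, IsAdj μ T S → IsAdj μ T' S' →
      IsAdj μ (T + T') (S + S')) ∧
    (∀ (c : ℂ) (T S : Module.End ℂ E), IsAdj μ T S →
      IsAdj μ (c • T) (conj c • S)) ∧
    -- the adjoint map is antimultiplicative
    (∀ T T' S S' : Module.End ℂ E, IsAdj μ T S → IsAdj μ T' S' →
      IsAdj μ (T * T') (S' * S)) ∧
    -- the adjoint map is an involution: `T** = T`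
    (∀ T S : Module.End ℂ E, IsAdj μ T S → IsAdj μ S T) ∧
    -- `L_l(E)` is admissible: `T*T = 0` implies `T = 0`
    (∀ T S : Module.End ℂ E, IsAdj μ T S → S * T = 0 → T = 0) ∧
    -- `span{θ_{y,z}}` is a two-sided ideal of `L_l(E)`
    (∀ T S : Module.End ℂ E, IsAdj μ T S →
      ∀ U ∈ Submodule.span ℂ {u : Module.End ℂ E | ∃ y z : E, u = theta h y z},
        T * U ∈ Submodule.span ℂ {u : Module.End ℂ E | ∃ y z : E, u = theta h y z} ∧
        U * T ∈ Submodule.span ℂ {u : Module.End ℂ E | ∃ y z : E, u = theta h y z}) ∧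
    -- the ideal is essential
    (∀ T S : Module.End ℂ E, IsAdj μ T S →
      ((∀ y z : E, T * theta h y z = 0) → T = 0) ∧
      ((∀ y z : E, theta h y z * T = 0) → T = 0)) := by
  obtain ⟨a1, s1, a2, s2, a3, s3, A, B⟩ := id h
  have zl : ∀ y z, μ 0 y z = 0 := fun y z => by simpa using s1 0 0 y z
  have n1 : ∀ x x' y z, μ (x - x') y z = μ x y z - μ x' y z := by
    intro x x' y z
    have := a1 (x - x') x' y z
    rw [sub_add_cancel] at this
    rw [this, add_sub_cancel_right]
  have n2 : ∀ x y y' z, μ x (y - y') z = μ x y z - μ x y' z := by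
    intro x y y' z
    have := a2 x (y - y') y' z
    rw [sub_add_cancel] at this
    rw [this, add_sub_cancel_right]
  have e1 : ∀ x x', (∀ y z, μ x y z = μ x' y z) → x = x' := fun x x' hx =>
    sub_eq_zero.1 (hadm _ (by rw [n1, hx, sub_self]))
  have e2 : ∀ y y', (∀ x z, μ x y z = μ x y' z) → y = y' := fun y y' hx =>
    sub_eq_zero.1 (hadm _ (by rw [n2, hx, sub_self]))
  have inv : ∀ T S : Module.End ℂ E, IsAdj μ T S → IsAdj μ S T := by
    intro T S hT x y z
    apply e2
    intro u v
    rw [B, B, ← hT]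
  have tm : ∀ T S : Module.End ℂ E, IsAdj μ T S → ∀ x y z, T (μ x y z) = μ x y (T z) := by
    intro T S hT x y z
    apply e2
    intro u v
    rw [hT, B, B, hT]
  refine ⟨?_, ?_, ?_, ?_, inv, ?_, ?_, ?_⟩
  · intro T S S' hS hS'
    ext x
    apply e1
    intro y z
    rw [← hS, ← hS']
  · intro T T' S S' hS hS' x y z
    simp only [LinearMap.add_apply]
    rw [a1, a2, hS, hS']
  · intro c T S hS x y z
    simp only [LinearMap.smul_apply]
    rw [s1, s2, hS]
  · intro T T' S S' hS hS' x y z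
    simp only [Module.End.mul_apply]
    rw [hS, hS']
  · intro T S hT h0
    ext x
    apply hadm
    rw [hT, ← Module.End.mul_apply, h0]
    exact zl _ _
  · intro T S hT U hU
    induction hU using Submodule.span_induction with
    | mem u hu =>
      obtain ⟨y, z, rfl⟩ := hu
      exact ⟨Submodule.subset_span ⟨y, T z, LinearMap.ext fun x => tm T S hT x y z⟩,
        Submodule.subset_span ⟨S y, z, LinearMap.ext fun x => (inv T S hT x y z).symm⟩⟩
    | zero => simp
    | add u v _ _ hu hv =>
      rw [mul_add, add_mul]
      exact ⟨add_mem hu.1 hv.1, add_mem hu.2 hv.2⟩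
    | smul c u _ hu =>
      rw [mul_smul_comm, smul_mul_assoc]
      exact ⟨Submodule.smul_mem _ _ hu.1, Submodule.smul_mem _ _ hu.2⟩
  · intro T S hT
    refine ⟨fun h0 => LinearMap.ext fun x => hadm _ ?_, fun h0 => LinearMap.ext fun x => hadm _ ?_⟩
    · rw [← tm T S hT]
      exact LinearMap.congr_fun (h0 (T x) x) (T x)
    · exact LinearMap.congr_fun (h0 (T x) (T x)) x
end
end

section
/- Let E be an admissible *-tring. Let E_0^r := span{θ_{y,z} : y,z ∈ E} ⊆ L_l(E), equipped with the multiplication opposite to composition and the involution T ↦ T*, let E be a right E_0^r-module via x·T := T(x), and define ⟨x,y⟩_r := θ_{x,y}. Then (E, E_0^r, ⟨·,·⟩_r) is a full admissible basic triple whose associated ternary product coincides with μ. -/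
noncomputable section

open scoped ComplexConjugate

theorem aux_adj {E : Type*} [AddCommGroup E] [Module ℂ E] {μ : E → E → E → E}
    (h : IsTernaryProduct μ) (T : Module.End ℂ E)
    (hT : T ∈ Submodule.span ℂ {u : Module.End ℂ E | ∃ y z : E, u = theta h y z}) :
    ∃ T' ∈ Submodule.span ℂ {u : Module.End ℂ E | ∃ y z : E, u = theta h y z},
      IsAdj μ T T' ∧ IsAdj μ T' T := by
  have z1 : ∀ y z, μ 0 y z = 0 := fun y z => (theta h y z).map_zero
  obtain ⟨h1, h2, h3, h4, h5, h6, h7, h8⟩ := id h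
  have z2 : ∀ x z, μ x 0 z = 0 := fun x z => by simpa using h4 0 x 0 z
  induction hT using Submodule.span_induction with
  | mem u hu =>
    obtain ⟨y, z, rfl⟩ := hu
    exact ⟨theta h z y, Submodule.subset_span ⟨z, y, rfl⟩,
      fun a b c => (h7 a z y b c).symm, fun a b c => (h7 a y z b c).symm⟩
  | zero => exact ⟨0, Submodule.zero_mem _, fun a b c => by simp [z1, z2],
      fun a b c => by simp [z1, z2]⟩
  | add u v _ _ hu hv =>
    obtain ⟨u', mu, au, bu⟩ := hu
    obtain ⟨v', mv, av, bv⟩ := hv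
    refine ⟨u' + v', Submodule.add_mem _ mu mv, fun a b c => ?_, fun a b c => ?_⟩
    · simp only [LinearMap.add_apply, h1, h3, au a b c, av a b c]
    · simp only [LinearMap.add_apply, h1, h3, bu a b c, bv a b c]
  | smul r u _ hu =>
    obtain ⟨u', mu, au, bu⟩ := hu
    refine ⟨conj r • u', Submodule.smul_mem _ _ mu, fun a b c => ?_, fun a b c => ?_⟩
    · simp only [LinearMap.smul_apply, h2, h4, au a b c]
    · simp only [LinearMap.smul_apply, h2, h4, bu a b c, Complex.conj_conj]

theorem aux_mul {E : Type*} [AddCommGroup E] [Module ℂ E] {μ : E → E → E → E}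
    (h : IsTernaryProduct μ) (T : Module.End ℂ E)
    (hT : T ∈ Submodule.span ℂ {u : Module.End ℂ E | ∃ y z : E, u = theta h y z})
    (x y : E) : T * theta h x y = theta h x (T y) := by
  obtain ⟨h1, h2, h3, h4, h5, h6, h7, h8⟩ := id h
  ext w
  change T (μ w x y) = μ w x (T y)
  induction hT using Submodule.span_induction with
  | mem u hu =>
    obtain ⟨a, b, rfl⟩ := hu
    exact (h7 w x y a b).trans (h8 w x y a b)
  | zero => simpa using (h6 0 w x 0).symm
  | add u v _ _ hu hv => simp only [LinearMap.add_apply, h5, hu, hv]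
  | smul r u _ hu => simp only [LinearMap.smul_apply, h6, hu]

/-- Let `E` be an admissible `*`-tring and
`E₀ʳ := span{θ_{y,z} : y,z ∈ E} ⊆ L_l(E)`, with the multiplication opposite to
composition (so `p * q := q ∘ p`, i.e. `q * p` in `Module.End`), the involution
`T ↦ T*`, the right action `x · T := T x` and `⟪x,y⟫_r := θ_{x,y}`.  Then
`(E, E₀ʳ, ⟪·,·⟫_r)` is a full admissible basic triple whose associated ternary
product coincides with `μ`.  (Fullness holds by construction, since `E₀ʳ` is
by definition the span of the inner products `θ_{x,y}`.) -/
theorem stmt_3 {E : Type*} [AddCommGroup E] [Module ℂ E] (μ : E → E → E → E)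
    (h : IsTernaryProduct μ) (hadm : ∀ x : E, μ x x x = 0 → x = 0) :
    -- `E₀ʳ` is closed under the (opposite) multiplication …
    (∀ T U : Module.End ℂ E,
      T ∈ Submodule.span ℂ {u : Module.End ℂ E | ∃ y z : E, u = theta h y z} →
      U ∈ Submodule.span ℂ {u : Module.End ℂ E | ∃ y z : E, u = theta h y z} →
      U * T ∈ Submodule.span ℂ {u : Module.End ℂ E | ∃ y z : E, u = theta h y z}) ∧
    -- … and under the involution, so it is a `*`-subalgebra of `L_l(E)ᵒᵖ`
    (∀ T : Module.End ℂ E,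
      T ∈ Submodule.span ℂ {u : Module.End ℂ E | ∃ y z : E, u = theta h y z} →
      ∃ T' ∈ Submodule.span ℂ {u : Module.End ℂ E | ∃ y z : E, u = theta h y z},
        IsAdj μ T T') ∧
    -- the `*`-algebra `E₀ʳ` is admissible: `(star T) * T = 0 → T = 0`, where the
    -- opposite product `(star T) * T` is the composition `T ∘ T*`
    (∀ T T' : Module.End ℂ E,
      T ∈ Submodule.span ℂ {u : Module.End ℂ E | ∃ y z : E, u = theta h y z} →
      IsAdj μ T T' → T * T' = 0 → T = 0) ∧
    -- the pairing is conjugate-linear in the first variable and linear in the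
    -- second one
    (∀ (c : ℂ) (x x' y : E), theta h (x + x') y = theta h x y + theta h x' y ∧
      theta h x (x' + y) = theta h x x' + theta h x y ∧
      theta h (c • x) y = conj c • theta h x y ∧
      theta h x (c • y) = c • theta h x y) ∧
    -- compatibility of the pairing with the right action:
    -- `⟪x,y⟫ · T = ⟪x, y·T⟫`, where in the opposite algebra `⟪x,y⟫ · T` is the
    -- composition `T ∘ θ_{x,y}`
    (∀ T : Module.End ℂ E,
      T ∈ Submodule.span ℂ {u : Module.End ℂ E | ∃ y z : E, u = theta h y z} →
      ∀ x y : E, T * theta h x y = theta h x (T y)) ∧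
    -- the involution sends `⟪x,y⟫` to `⟪y,x⟫`
    (∀ x y : E, IsAdj μ (theta h x y) (theta h y x)) ∧
    -- the associated ternary product `x⟪y,z⟫ = θ_{y,z}(x)` coincides with `μ`
    (∀ x y z : E, theta h y z x = μ x y z) := by
  have z1 : ∀ y z, μ 0 y z = 0 := fun y z => (theta h y z).map_zero
  obtain ⟨h1, h2, h3, h4, h5, h6, h7, h8⟩ := id h
  refine ⟨?_, ?_, ?_, ?_, fun T hT x y => aux_mul h T hT x y,
    fun x y a b c => (h7 a y x b c).symm, fun _ _ _ => rfl⟩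
  · intro T U hT hU
    induction hT using Submodule.span_induction with
    | mem u hu =>
      obtain ⟨a, b, rfl⟩ := hu
      rw [aux_mul h U hU]
      exact Submodule.subset_span ⟨_, _, rfl⟩
    | zero => rw [mul_zero]; exact Submodule.zero_mem _
    | add u v _ _ hu hv => rw [mul_add]; exact Submodule.add_mem _ hu hv
    | smul r u _ hu => rw [mul_smul_comm]; exact Submodule.smul_mem _ _ hu
  · intro T hT
    obtain ⟨T', m, a, _⟩ := aux_adj h T hT
    exact ⟨T', m, a⟩
  · intro T T' hT hA h0
    obtain ⟨S, _, a, b⟩ := aux_adj h T hT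
    have hS : ∀ x, T' x = S x := by
      intro x
      rw [← sub_eq_zero]
      apply hadm
      have key : ∀ y z, μ (T' x - S x) y z = 0 := by
        intro y z
        have e : μ (T' x) y z = μ (S x) y z := (hA x y z).symm.trans (a x y z)
        have := (theta h y z).map_sub (T' x) (S x)
        exact this.trans (sub_eq_zero.mpr e)
      exact key _ _
    have hT0 : ∀ x, T (S x) = 0 := fun x => by
      rw [← hS x]; exact LinearMap.congr_fun h0 x
    have hS0 : ∀ x, S x = 0 := fun x => by
      apply hadm
      rw [b, hT0, z1]
    ext x
    apply hadm
    rw [a, hS0, z1]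
  · intro c x x' y
    refine ⟨?_, ?_, ?_, ?_⟩ <;> ext w
    · exact h3 w x x' y
    · exact h5 w x x' y
    · exact h4 c w x y
    · exact h6 c w x y
end
end

section
/- Let (E, A, ⟨·,·⟩) be a full basic triple such that E is a faithful A-module. If E with the associated ternary product is an admissible *-tring, then A is admissible as a *-algebra, i.e., a*a = 0 implies a = 0. -/
noncomputable section

open scoped ComplexConjugate

variable {E A : Type*} [AddCommGroup E] [Module ℂ E]
    [NonUnitalRing A] [Module ℂ A] [StarRing A]

/-- Let `(E, A, ⟪·,·⟫)` be a full basic triple such that `E`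
is a faithful `A`-module.  If `E` with the associated ternary product is an
admissible `*`-tring, then `A` is admissible as a `*`-algebra. -/
theorem stmt_4 {E A : Type*} [AddCommGroup E] [Module ℂ E]
    [NonUnitalRing A] [Module ℂ A] [StarRing A] [StarModule ℂ A]
    [IsScalarTower ℂ A A] [SMulCommClass ℂ A A]
    (t : BasicTriple E A) (hfull : t.Full) (hfaith : t.Faithful)
    (hadm : ∀ x : E, t.mu x x x = 0 → x = 0) :
    ∀ a : A, star a * a = 0 → a = 0 := by
  intro a ha
  have hz : ∀ x : E, t.act x 0 = 0 := by
    intro x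
    have h := t.act_add_right x 0 0
    simpa using h
  have hz' : ∀ b : A, t.act 0 b = 0 := by
    intro b
    have h := t.act_add_left 0 0 b
    simpa using h
  have key : star a = 0 := by
    apply hfaith
    intro x
    apply hadm
    have h1 : t.inner (t.act x (star a)) (t.act x (star a))
        = a * t.inner x (t.act x (star a)) := by
      rw [← t.star_inner, ← t.inner_mul, star_mul, star_star, t.star_inner]
    unfold BasicTriple.mu
    rw [h1, ← t.act_mul, t.act_mul x, ha, hz, hz']
  simpa using key
end
end

section
/- Let (E, A, ⟨·,·⟩_A) and (F, B, ⟨·,·⟩_B) be full basic triples such that E and F with their associated ternary products are admissible *-trings and are faithful modules over A and B respectively. Let φ : E → F be a homomorphism of the associated *-trings and let ψ : A → B be the induced *-algebra homomorphism, i.e., the unique one with ψ(⟨x,y⟩_A) = ⟨φ(x),φ(y)⟩_B for all x,y ∈ E. Then φ is injective if and only if ψ is injective, and if φ is surjective then ψ is surjective. -/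
noncomputable section

open scoped ComplexConjugate

variable {E A : Type*} [AddCommGroup E] [Module ℂ E]
    [NonUnitalRing A] [Module ℂ A] [StarRing A]

/-- Let `(E, A, ⟪·,·⟫_A)` and `(F, B, ⟪·,·⟫_B)` be full basic
triples whose associated `*`-trings are admissible and which are faithful
modules, let `φ : E → F` be a homomorphism of the associated `*`-trings and
`ψ : A → B` the induced `*`-homomorphism (the unique one with
`ψ⟪x,y⟫_A = ⟪φ x, φ y⟫_B`).  Then `φ` is injective iff `ψ` is injective, and if
`φ` is surjective then so is `ψ`. -/
theorem stmt_5 {E A F B : Type*} [AddCommGroup E] [Module ℂ E]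
    [NonUnitalRing A] [Module ℂ A] [StarRing A] [StarModule ℂ A]
    [IsScalarTower ℂ A A] [SMulCommClass ℂ A A]
    [AddCommGroup F] [Module ℂ F]
    [NonUnitalRing B] [Module ℂ B] [StarRing B] [StarModule ℂ B]
    [IsScalarTower ℂ B B] [SMulCommClass ℂ B B]
    (t : BasicTriple E A) (s : BasicTriple F B)
    (htfull : t.Full) (hsfull : s.Full)
    (hEadm : ∀ x : E, t.mu x x x = 0 → x = 0)
    (hFadm : ∀ y : F, s.mu y y y = 0 → y = 0)
    (htfaith : t.Faithful) (hsfaith : s.Faithful)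
    (φ : E →ₗ[ℂ] F)
    (hφ : ∀ x y z : E, φ (t.mu x y z) = s.mu (φ x) (φ y) (φ z))
    (ψ : A →⋆ₙₐ[ℂ] B)
    (hψ : ∀ x y : E, ψ (t.inner x y) = s.inner (φ x) (φ y)) :
    (Function.Injective φ ↔ Function.Injective ψ) ∧
    (Function.Surjective φ → Function.Surjective ψ) := by
  have hact : ∀ (a : A) (x : E), φ (t.act x a) = s.act (φ x) (ψ a) := by
    intro a x
    have ha : a ∈ Submodule.span ℂ {a : A | ∃ x y : E, t.inner x y = a} := by
      have h := htfull
      unfold BasicTriple.Full at h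
      rw [h]
      trivial
    induction ha using Submodule.span_induction with
    | mem a h =>
      obtain ⟨y, z, rfl⟩ := h
      rw [hψ]
      exact hφ x y z
    | zero =>
      have h1 := t.act_smul_right 0 x 0
      have h2 := s.act_smul_right 0 (φ x) 0
      simp only [zero_smul] at h1 h2
      rw [h1, map_zero, map_zero, h2]
    | add a b _ _ iha ihb =>
      rw [t.act_add_right, map_add, map_add, s.act_add_right, iha, ihb]
    | smul c a _ iha =>
      rw [t.act_smul_right, map_smul, map_smul, s.act_smul_right, iha]
  have tz : ∀ x : E, t.act x 0 = 0 := by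
    intro x
    have h := t.act_smul_right 0 x 0
    simpa only [zero_smul] using h
  have sz : ∀ x : F, s.act x 0 = 0 := by
    intro x
    have h := s.act_smul_right 0 x 0
    simpa only [zero_smul] using h
  have iz : ∀ x : F, s.inner x 0 = 0 := by
    intro x
    have h := s.inner_smul_right 0 x 0
    simpa only [zero_smul] using h
  refine ⟨⟨fun hinj => ?_, fun hinj => ?_⟩, fun hsurj => ?_⟩
  · rw [injective_iff_map_eq_zero]
    intro a ha
    refine htfaith a fun x => hinj ?_
    rw [hact, ha, sz, map_zero]
  · rw [injective_iff_map_eq_zero]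
    intro x hx
    apply hEadm
    have h : t.inner x x = 0 := by
      apply hinj
      rw [hψ, hx, iz, map_zero]
    unfold BasicTriple.mu
    rw [h, tz]
  · intro b
    have hb : b ∈ Submodule.span ℂ {b : B | ∃ x y : F, s.inner x y = b} := by
      have h := hsfull
      unfold BasicTriple.Full at h
      rw [h]
      trivial
    induction hb using Submodule.span_induction with
    | mem b h =>
      obtain ⟨y, z, rfl⟩ := h
      obtain ⟨y, rfl⟩ := hsurj y
      obtain ⟨z, rfl⟩ := hsurj z
      exact ⟨_, hψ y z⟩
    | zero => exact ⟨0, map_zero ψ⟩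
    | add a b _ _ iha ihb =>
      obtain ⟨a, rfl⟩ := iha
      obtain ⟨b, rfl⟩ := ihb
      exact ⟨a + b, map_add ψ a b⟩
    | smul c a _ iha =>
      obtain ⟨a, rfl⟩ := iha
      exact ⟨c • a, map_smul ψ c a⟩
end
end

section
/- Let (E, A, ⟨·,·⟩) be a full basic triple such that E with the associated ternary product is an admissible *-tring and E is a faithful A-module. Let γ be a C*-seminorm on E and define γ^r(a) := sup{γ(xa) : x ∈ E, γ(x) ≤ 1} for a ∈ A. Then γ^r(a) is finite for every a ∈ A, γ^r is a C*-seminorm on A, and the following hold for all x,y ∈ E and a ∈ A: γ(xa) ≤ γ(x)γ^r(a); γ^r(⟨x,y⟩) ≤ γ(x)γ(y); γ(x)² = γ^r(⟨x,x⟩). Moreover γ^r is a norm if and only if γ is a norm. -/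
noncomputable section

open scoped ComplexConjugate

variable {E A : Type*} [AddCommGroup E] [Module ℂ E]
    [NonUnitalRing A] [Module ℂ A] [StarRing A]

/-- A `C*`-seminorm on a `*`-tring `(E, μ)`. -/
def IsCStarSeminormTring {E : Type*} [AddCommGroup E] [Module ℂ E]
    (μ : E → E → E → E) (γ : E → ℝ) : Prop :=
  (∀ x y : E, γ (x + y) ≤ γ x + γ y) ∧
  (∀ (c : ℂ) (x : E), γ (c • x) = ‖c‖ * γ x) ∧
  (∀ x y z : E, γ (μ x y z) ≤ γ x * γ y * γ z) ∧
  (∀ x : E, γ (μ x x x) = (γ x) ^ 3)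

/-- A `C*`-seminorm on a complex `*`-algebra `A`. -/
def IsCStarSeminormAlg {A : Type*} [NonUnitalRing A] [Module ℂ A] [StarRing A]
    (α : A → ℝ) : Prop :=
  (∀ a b : A, α (a + b) ≤ α a + α b) ∧
  (∀ (c : ℂ) (a : A), α (c • a) = ‖c‖ * α a) ∧
  (∀ a b : A, α (a * b) ≤ α a * α b) ∧
  (∀ a : A, α (star a * a) = (α a) ^ 2)

/-- Let `(E, A, ⟪·,·⟫)` be a full basic triple whose
associated `*`-tring is admissible and such that `E` is a faithful `A`-module,
and let `γ` be a `C*`-seminorm on `E`.  Then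
`γʳ(a) := sup{γ(xa) : γ(x) ≤ 1}` is finite for every `a` (expressed below by
saying that `γʳ a` is the least upper bound of the relevant set of reals),
`γʳ` is a `C*`-seminorm on `A`, the displayed inequalities hold, and `γʳ` is a
norm iff `γ` is a norm. -/
theorem stmt_6 {E A : Type*} [AddCommGroup E] [Module ℂ E]
    [NonUnitalRing A] [Module ℂ A] [StarRing A] [StarModule ℂ A]
    [IsScalarTower ℂ A A] [SMulCommClass ℂ A A]
    (t : BasicTriple E A) (hfull : t.Full) (hfaith : t.Faithful)
    (hadm : ∀ x : E, t.mu x x x = 0 → x = 0)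
    (γ : E → ℝ) (hγ : IsCStarSeminormTring t.mu γ) :
    ∃ γr : A → ℝ,
      (∀ a : A, IsLUB {s : ℝ | ∃ x : E, γ x ≤ 1 ∧ s = γ (t.act x a)} (γr a)) ∧
      IsCStarSeminormAlg γr ∧
      (∀ (x : E) (a : A), γ (t.act x a) ≤ γ x * γr a) ∧
      (∀ x y : E, γr (t.inner x y) ≤ γ x * γ y) ∧
      (∀ x : E, (γ x) ^ 2 = γr (t.inner x x)) ∧
      ((∀ a : A, γr a = 0 → a = 0) ↔ (∀ x : E, γ x = 0 → x = 0)) := by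
  obtain ⟨h1, h2, h3, h4⟩ := hγ
  have g0 : γ 0 = 0 := by simpa using h2 0 0
  have gnn : ∀ x, 0 ≤ γ x := by
    intro x
    have e := h1 x ((-1 : ℂ) • x)
    rw [h2] at e
    have : x + (-1 : ℂ) • x = 0 := by simp
    rw [this, g0] at e
    simp at e
    linarith
  have act0 : ∀ x, t.act x 0 = 0 := fun x => by simpa using t.act_smul_right 0 x 0
  have act0l : ∀ a, t.act 0 a = 0 := fun a => by simpa using t.act_smul_left 0 0 a
  have bdd : ∀ a : A, ∃ C : ℝ, 0 ≤ C ∧ ∀ x, γ (t.act x a) ≤ γ x * C := by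
    intro a
    have ha : a ∈ Submodule.span ℂ {a : A | ∃ x y : E, t.inner x y = a} := by
      have hf : Submodule.span ℂ {a : A | ∃ x y : E, t.inner x y = a} = ⊤ := hfull
      rw [hf]; trivial
    induction ha using Submodule.span_induction with
    | mem b hb =>
      obtain ⟨y, z, rfl⟩ := hb
      refine ⟨γ y * γ z, mul_nonneg (gnn _) (gnn _), fun x => ?_⟩
      have := h3 x y z
      rw [← mul_assoc]; exact this
    | zero => exact ⟨0, le_rfl, fun x => by rw [act0, g0]; simp⟩
    | add b c _ _ hb hc =>
      obtain ⟨B, hB, hb⟩ := hb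
      obtain ⟨C, hC, hc⟩ := hc
      refine ⟨B + C, by positivity, fun x => ?_⟩
      rw [t.act_add_right]
      have := h1 (t.act x b) (t.act x c)
      have := hb x
      have := hc x
      linarith
    | smul c b _ hb =>
      obtain ⟨B, hB, hb⟩ := hb
      refine ⟨‖c‖ * B, by positivity, fun x => ?_⟩
      rw [t.act_smul_right, h2]
      have := mul_le_mul_of_nonneg_left (hb x) (norm_nonneg c)
      linarith
  have lub : ∀ a : A, ∃ r, IsLUB {s : ℝ | ∃ x : E, γ x ≤ 1 ∧ s = γ (t.act x a)} r := by
    intro a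
    refine Real.exists_isLUB ⟨0, 0, by rw [g0]; norm_num, by rw [act0l, g0]⟩ ?_
    obtain ⟨C, hC, h⟩ := bdd a
    refine ⟨C, ?_⟩
    rintro s ⟨x, hx, rfl⟩
    have := h x
    nlinarith
  choose r hr using lub
  have rnn : ∀ a, 0 ≤ r a := fun a =>
    (hr a).1 ⟨0, by rw [g0]; norm_num, by rw [act0l, g0]⟩
  have key : ∀ x a, γ (t.act x a) ≤ γ x * r a := by
    intro x a
    rcases (gnn x).eq_or_lt with h | h
    · obtain ⟨C, hC, hh⟩ := bdd a
      have := hh x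
      rw [← h] at this ⊢
      linarith
    · have hn : ‖((γ x : ℂ))⁻¹‖ = (γ x)⁻¹ := by
        rw [norm_inv, Complex.norm_real, Real.norm_of_nonneg h.le]
      have := (hr a).1 ⟨((γ x : ℂ))⁻¹ • x, by
        rw [h2, hn, inv_mul_cancel₀ h.ne'], rfl⟩
      rw [t.act_smul_left, h2, hn] at this
      rwa [inv_mul_le_iff₀ h] at this
  have rle : ∀ a C, 0 ≤ C → (∀ x, γ (t.act x a) ≤ γ x * C) → r a ≤ C := by
    intro a C hC h
    refine (hr a).2 ?_
    rintro s ⟨x, hx, rfl⟩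
    have := h x
    nlinarith
  have radd : ∀ a b, r (a + b) ≤ r a + r b := by
    intro a b
    refine rle _ _ (add_nonneg (rnn _) (rnn _)) fun x => ?_
    rw [t.act_add_right]
    have := h1 (t.act x a) (t.act x b)
    have := key x a
    have := key x b
    linarith
  have rsm : ∀ (c : ℂ) a, r (c • a) ≤ ‖c‖ * r a := by
    intro c a
    refine rle _ _ (mul_nonneg (norm_nonneg _) (rnn _)) fun x => ?_
    rw [t.act_smul_right, h2]
    have := mul_le_mul_of_nonneg_left (key x a) (norm_nonneg c)
    linarith
  have rsmul : ∀ (c : ℂ) a, r (c • a) = ‖c‖ * r a := by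
    intro c a
    refine le_antisymm (rsm c a) ?_
    by_cases hc : c = 0
    · subst hc
      have := rnn ((0 : ℂ) • a)
      simpa using this
    · have := rsm c⁻¹ (c • a)
      rw [inv_smul_smul₀ hc, norm_inv] at this
      rwa [← le_inv_mul_iff₀ (norm_pos_iff.mpr hc)]
  have rmul : ∀ a b, r (a * b) ≤ r a * r b := by
    intro a b
    refine rle _ _ (mul_nonneg (rnn _) (rnn _)) fun x => ?_
    rw [← t.act_mul]
    have := key (t.act x a) b
    have := mul_le_mul_of_nonneg_right (key x a) (rnn b)
    linarith
  have innl : ∀ x y a, t.inner (t.act x a) y = star a * t.inner x y := by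
    intro x y a
    rw [← t.star_inner y, ← t.inner_mul, star_mul, t.star_inner]
  have rsq : ∀ a, (r a) ^ 2 ≤ r (a * star a) := by
    intro a
    have hs : r a ≤ √(r (a * star a)) := by
      refine (hr a).2 ?_
      rintro s ⟨x, hx, rfl⟩
      refine Real.le_sqrt_of_sq_le ?_
      have e : t.mu (t.act x a) (t.act x a) (t.act x a)
          = t.mu (t.act x (a * star a)) x (t.act x a) := by
        simp only [BasicTriple.mu, innl, t.act_mul, mul_assoc]
      have e4 := h4 (t.act x a)
      have e3 := h3 (t.act x (a * star a)) x (t.act x a)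
      rw [← e, e4] at e3
      have k := key x (a * star a)
      have n1 := gnn x
      have n2 := rnn (a * star a)
      have n3 := gnn (t.act x (a * star a))
      have k2 : γ (t.act x (a * star a)) * γ x ≤ r (a * star a) := by
        have : γ (t.act x (a * star a)) ≤ r (a * star a) := by nlinarith
        nlinarith
      rcases (gnn (t.act x a)).eq_or_lt with h | h
      · rw [← h]; simpa using n2
      · refine le_trans ?_ k2
        refine le_of_mul_le_mul_right ?_ h
        linarith [pow_succ (γ (t.act x a)) 2]
    calc (r a) ^ 2 ≤ √(r (a * star a)) ^ 2 := by
          gcongr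
          exact rnn a
      _ = _ := Real.sq_sqrt (rnn _)
  have rstar_le : ∀ a, r a ≤ r (star a) := by
    intro a
    rcases (rnn a).eq_or_lt with h | h
    · rw [← h]; exact rnn _
    · refine le_of_mul_le_mul_left ?_ h
      have := rsq a
      have := rmul a (star a)
      linarith [sq (r a)]
  have rstar : ∀ a, r (star a) = r a := fun a =>
    le_antisymm (by simpa using rstar_le (star a)) (rstar_le a)
  have rinn : ∀ x y, r (t.inner x y) ≤ γ x * γ y := by
    intro x y
    refine rle _ _ (mul_nonneg (gnn _) (gnn _)) fun z => ?_
    rw [← mul_assoc]; exact h3 z x y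
  have rxx : ∀ x, (γ x) ^ 2 = r (t.inner x x) := by
    intro x
    refine le_antisymm ?_ (by rw [sq]; exact rinn x x)
    rcases (gnn x).eq_or_lt with h | h
    · rw [← h]; simpa using rnn _
    · refine le_of_mul_le_mul_left ?_ h
      have e : γ (t.mu x x x) ≤ _ := key x (t.inner x x)
      rw [h4] at e
      linarith [pow_succ (γ x) 2]
  refine ⟨r, hr, ⟨radd, rsmul, rmul, fun a => ?_⟩, key, rinn, rxx, fun h x hx => ?_,
    fun h a ha => ?_⟩
  · refine le_antisymm ?_ ?_
    · have := rmul (star a) a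
      rwa [rstar, ← sq] at this
    · have := rsq (star a)
      rwa [rstar, star_star] at this
  · have e := rxx x
    rw [hx] at e
    have e2 := h _ (by rw [← e]; norm_num)
    exact hadm x (by rw [BasicTriple.mu, e2, act0])
  · refine hfaith a fun x => h _ (le_antisymm ?_ (gnn _))
    have := key x a
    rwa [ha, mul_zero] at this
end
end

section
/- Let (E, A, ⟨·,·⟩) be a basic triple, consider E as a *-tring with the associated ternary product, and let α be a C*-seminorm on A satisfying the Cauchy–Schwarz condition. Define α̃(x) := α(⟨x,x⟩)^{1/2} for x ∈ E. Then: (1) α̃(xa) ≤ α̃(x)α(a) for all x ∈ E, a ∈ A; (2) α̃ is a C*-seminorm on E; (3) if E is a faithful A-module and α̃ is a norm, then α is a norm; (4) if α is a norm and ⟨x,x⟩ = 0 implies x = 0, then α̃ is a norm. -/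
noncomputable section

open scoped ComplexConjugate

variable {E A : Type*} [AddCommGroup E] [Module ℂ E]
    [NonUnitalRing A] [Module ℂ A] [StarRing A]

/-- Let `(E, A, ⟪·,·⟫)` be a basic triple, `E` viewed as a
`*`-tring with the associated ternary product, and `α` a `C*`-seminorm on `A`
satisfying the Cauchy–Schwarz condition.  Setting `α̃(x) := α(⟪x,x⟫)^{1/2}`:
(1) `α̃(xa) ≤ α̃(x)α(a)`; (2) `α̃` is a `C*`-seminorm on `E`; (3) if `E` is a
faithful `A`-module and `α̃` is a norm then `α` is a norm; (4) if `α` is a norm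
and `⟪x,x⟫ = 0` implies `x = 0`, then `α̃` is a norm. -/
theorem stmt_7 {E A : Type*} [AddCommGroup E] [Module ℂ E]
    [NonUnitalRing A] [Module ℂ A] [StarRing A] [StarModule ℂ A]
    [IsScalarTower ℂ A A] [SMulCommClass ℂ A A]
    (t : BasicTriple E A)
    (α : A → ℝ) (hα : IsCStarSeminormAlg α)
    (hcs : ∀ x y : E, (α (t.inner x y)) ^ 2 ≤ α (t.inner x x) * α (t.inner y y)) :
    (∀ (x : E) (a : A),
        Real.sqrt (α (t.inner (t.act x a) (t.act x a))) ≤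
          Real.sqrt (α (t.inner x x)) * α a) ∧
    IsCStarSeminormTring t.mu (fun x => Real.sqrt (α (t.inner x x))) ∧
    (t.Faithful → (∀ x : E, Real.sqrt (α (t.inner x x)) = 0 → x = 0) →
      ∀ a : A, α a = 0 → a = 0) ∧
    ((∀ a : A, α a = 0 → a = 0) → (∀ x : E, t.inner x x = 0 → x = 0) →
      ∀ x : E, Real.sqrt (α (t.inner x x)) = 0 → x = 0) := by
  obtain ⟨hadd, hsm, hmul, hst⟩ := hα
  have h0 : α 0 = 0 := by simpa using hsm 0 0
  have hneg : ∀ a, α (-a) = α a := fun a => by simpa using hsm (-1) a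
  have hnn : ∀ a, 0 ≤ α a := fun a => by
    have := hadd a (-a)
    rw [add_neg_cancel, h0, hneg] at this
    linarith
  have hle : ∀ a, α a ≤ α (star a) := fun a => by
    by_contra! h
    have h1 := hmul (star a) a
    rw [hst] at h1
    nlinarith [hnn a, hnn (star a)]
  have hstar : ∀ a, α (star a) = α a := fun a =>
    le_antisymm (by simpa using hle (star a)) (hle a)
  have hin : ∀ x a, t.inner (t.act x a) (t.act x a) = star a * t.inner x x * a := by
    intro x a
    rw [← t.inner_mul, ← t.star_inner x (t.act x a), ← t.inner_mul, star_mul, t.star_inner]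
  have H1 : ∀ (x : E) (a : A), Real.sqrt (α (t.inner (t.act x a) (t.act x a))) ≤
          Real.sqrt (α (t.inner x x)) * α a := by
    intro x a
    apply Real.sqrt_le_iff.2
    refine ⟨mul_nonneg (Real.sqrt_nonneg _) (hnn a), ?_⟩
    rw [mul_pow, Real.sq_sqrt (hnn _), hin]
    calc _ ≤ α (star a * t.inner x x) * α a := hmul _ _
      _ ≤ (α (star a) * α (t.inner x x)) * α a :=
        mul_le_mul_of_nonneg_right (hmul _ _) (hnn a)
      _ = _ := by rw [hstar]; ring
  have hcs' : ∀ x y, α (t.inner x y) ≤ Real.sqrt (α (t.inner x x)) * Real.sqrt (α (t.inner y y)) := by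
    intro x y
    rw [← Real.sqrt_mul (hnn _)]
    exact Real.le_sqrt_of_sq_le (hcs x y)
  refine ⟨H1, ⟨?_, ?_, ?_, ?_⟩, ?_, ?_⟩
  · intro x y
    apply Real.sqrt_le_iff.2
    refine ⟨add_nonneg (Real.sqrt_nonneg _) (Real.sqrt_nonneg _), ?_⟩
    rw [add_sq, Real.sq_sqrt (hnn _), Real.sq_sqrt (hnn _), t.inner_add_left, t.inner_add_right,
      t.inner_add_right]
    have a1 := hadd (t.inner x x + t.inner x y) (t.inner y x + t.inner y y)
    have a2 := hadd (t.inner x x) (t.inner x y)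
    have a3 := hadd (t.inner y x) (t.inner y y)
    have a4 := hcs' x y
    have a5 := hcs' y x
    linarith
  · intro c x
    show Real.sqrt _ = _ * Real.sqrt _
    rw [t.inner_smul_left, t.inner_smul_right, hsm, hsm, ← mul_assoc, Complex.norm_conj,
      Real.sqrt_mul (by positivity), Real.sqrt_mul_self (norm_nonneg c)]
  · intro x y z
    calc _ ≤ Real.sqrt (α (t.inner x x)) * α (t.inner y z) := H1 _ _
      _ ≤ Real.sqrt (α (t.inner x x)) * _ :=
        mul_le_mul_of_nonneg_left (hcs' y z) (Real.sqrt_nonneg _)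
      _ = _ := by ring
  · intro x
    show Real.sqrt (α (t.inner (t.act x (t.inner x x)) (t.act x (t.inner x x)))) = Real.sqrt _ ^ 3
    rw [hin, t.star_inner]
    have hs := t.star_inner x x
    generalize t.inner x x = h at hs
    have e2 : α (h * h) = α h ^ 2 := by have := hst h; rwa [hs] at this
    have e4 : α (h * h * h * h) = α h ^ 4 := by
      have := hst (h * h)
      rw [star_mul, hs, e2, ← mul_assoc] at this
      rw [this]; ring
    have u : α (h * h * h) ≤ α h ^ 3 := by
      have h1 := hmul (h * h) h
      rw [e2] at h1
      linarith [pow_succ (α h) 2]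
    have l : α h ^ 3 ≤ α (h * h * h) := by
      rcases (hnn h).eq_or_lt with hz | hz
      · rw [← hz]; simpa using hnn (h * h * h)
      · have h1 := hmul (h * h * h) h
        rw [e4, pow_succ] at h1
        exact le_of_mul_le_mul_right h1 hz
    rw [le_antisymm u l, Real.sqrt_eq_iff_mul_self_eq (by have := hnn h; positivity) (by positivity)]
    rw [← mul_pow, Real.mul_self_sqrt (hnn h)]
  · intro hf hn a ha
    refine hf a fun x => hn _ (le_antisymm ?_ (Real.sqrt_nonneg _))
    simpa [ha] using H1 x a
  · intro hn hx x h
    exact hx x (hn _ ((Real.sqrt_eq_zero (hnn _)).1 h))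
end
end

section
/- Let (E, A, ⟨·,·⟩) be a full basic triple and let α be a C*-seminorm on A satisfying the Cauchy–Schwarz condition. Then {a ∈ A : α(⟨xa, xa⟩) = 0 for all x ∈ E} = {a ∈ A : α(a) = 0}. -/
noncomputable section

open scoped ComplexConjugate

variable {E A : Type*} [AddCommGroup E] [Module ℂ E]
    [NonUnitalRing A] [Module ℂ A] [StarRing A]

/-- Let `(E, A, ⟪·,·⟫)` be a full basic triple and `α` a
`C*`-seminorm on `A` satisfying the Cauchy–Schwarz condition.  Then
`{a : α(⟪xa,xa⟫) = 0 for all x} = {a : α(a) = 0}`. -/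
theorem stmt_8 {E A : Type*} [AddCommGroup E] [Module ℂ E]
    [NonUnitalRing A] [Module ℂ A] [StarRing A] [StarModule ℂ A]
    [IsScalarTower ℂ A A] [SMulCommClass ℂ A A]
    (t : BasicTriple E A) (hfull : t.Full)
    (α : A → ℝ) (hα : IsCStarSeminormAlg α)
    (hcs : ∀ x y : E, (α (t.inner x y)) ^ 2 ≤ α (t.inner x x) * α (t.inner y y)) :
    {a : A | ∀ x : E, α (t.inner (t.act x a) (t.act x a)) = 0} =
      {a : A | α a = 0} := by
  obtain ⟨hadd, hsmul, hmul, hstar⟩ := hα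
  have h0 : α 0 = 0 := by simpa using hsmul 0 0
  have hnn : ∀ b, 0 ≤ α b := by
    intro b
    have h1 := hadd b ((-1 : ℂ) • b)
    have h2 := hsmul (-1) b
    have h3 : b + (-1 : ℂ) • b = 0 := by simp
    rw [h3, h0, h2] at h1
    simp at h1
    linarith
  ext a
  simp only [Set.mem_setOf_eq]
  constructor
  · intro h
    have key : ∀ b : A, α (b * a) = 0 := by
      intro b
      have hb : b ∈ Submodule.span ℂ {a : A | ∃ x y : E, t.inner x y = a} := by
        have hf : Submodule.span ℂ {a : A | ∃ x y : E, t.inner x y = a} = ⊤ := hfull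
        rw [hf]; trivial
      induction hb using Submodule.span_induction with
      | mem b hb =>
        obtain ⟨x, y, rfl⟩ := hb
        rw [t.inner_mul]
        have h1 := hcs x (t.act y a)
        rw [h y, mul_zero] at h1
        exact pow_eq_zero_iff (two_ne_zero) |>.1 (le_antisymm h1 (sq_nonneg _))
      | zero => rw [zero_mul, h0]
      | add u v _ _ hu hv =>
        rw [add_mul]
        have h1 := hadd (u * a) (v * a)
        rw [hu, hv, add_zero] at h1
        exact le_antisymm h1 (hnn _)
      | smul c u _ hu => rw [smul_mul_assoc, hsmul, hu, mul_zero]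
    have h1 := hstar a
    rw [key] at h1
    exact pow_eq_zero_iff (two_ne_zero) |>.1 h1.symm
  · intro h x
    rw [← t.inner_mul]
    have h1 := hmul (t.inner (t.act x a) x) a
    rw [h, mul_zero] at h1
    exact le_antisymm h1 (hnn _)
end
end

section
/- Let (E, A, ⟨·,·⟩) be a full basic triple such that E with the associated ternary product is an admissible *-tring and E is a faithful A-module. Then the map Φ sending a C*-seminorm γ on E to γ^r, where γ^r(a) := sup{γ(xa) : x ∈ E, γ(x) ≤ 1}, and the map Ψ sending a C*-seminorm α on A satisfying the Cauchy–Schwarz condition to α̃, where α̃(x) := α(⟨x,x⟩)^{1/2}, are mutually inverse order-preserving bijections between the set of C*-seminorms on E and the set of C*-seminorms on A satisfying the Cauchy–Schwarz condition. Moreover Φ restricts to a bijection between the C*-norms on E and the C*-norms on A satisfying the Cauchy–Schwarz condition. -/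
noncomputable section

open scoped ComplexConjugate

variable {E A : Type*} [AddCommGroup E] [Module ℂ E]
    [NonUnitalRing A] [Module ℂ A] [StarRing A]

variable [StarModule ℂ A] [IsScalarTower ℂ A A] [SMulCommClass ℂ A A]

/-- `Φ` sends a `C*`-seminorm `γ` on `E` to the operator seminorm
`γʳ(a) = sup{γ(xa) : γ(x) ≤ 1}` on `A`. -/
def PhiMap (t : BasicTriple E A) (γ : E → ℝ) : A → ℝ :=
  fun a => sSup {s : ℝ | ∃ x : E, γ x ≤ 1 ∧ s = γ (t.act x a)}

/-- `Ψ` sends a `C*`-seminorm `α` on `A` (with the Cauchy–Schwarz property) to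
the seminorm `α̃(x) = α(⟪x,x⟫)^{1/2}` on `E`. -/
def PsiMap (t : BasicTriple E A) (α : A → ℝ) : E → ℝ :=
  fun x => Real.sqrt (α (t.inner x x))

/-- `α` is a `C*`-seminorm on `A` satisfying the Cauchy–Schwarz condition for
the pairing of the basic triple `t`. -/
def IsCSSeminorm (t : BasicTriple E A) (α : A → ℝ) : Prop :=
  IsCStarSeminormAlg α ∧
    ∀ x y : E, (α (t.inner x y)) ^ 2 ≤ α (t.inner x x) * α (t.inner y y)

section helpers

theorem aux_nonneg {V : Type*} [AddCommGroup V] [Module ℂ V] {p : V → ℝ}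
    (h1 : ∀ x y, p (x + y) ≤ p x + p y) (h2 : ∀ (c : ℂ) x, p (c • x) = ‖c‖ * p x) (x : V) :
    0 ≤ p x := by
  have h0 : p 0 = 0 := by simpa using h2 0 0
  have hn : p (-x) = p x := by simpa using h2 (-1) x
  have := h1 x (-x)
  rw [add_neg_cancel, h0, hn] at this
  linarith

theorem aux_star {B : Type*} [NonUnitalRing B] [Module ℂ B] [StarRing B] {α : B → ℝ}
    (h : IsCStarSeminormAlg α) (a : B) : α (star a) = α a := by
  obtain ⟨h1, h2, h3, h4⟩ := h
  have key : ∀ a, α a ≤ α (star a) := by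
    intro a
    have n1 := aux_nonneg h1 h2 a
    have n2 := aux_nonneg h1 h2 (star a)
    have := h3 (star a) a
    rw [h4] at this
    by_contra hc
    push Not at hc
    nlinarith
  refine le_antisymm ?_ (key a)
  simpa using key (star a)

def auxPow {B : Type*} [NonUnitalRing B] (h : B) : ℕ → B
  | 0 => h
  | n + 1 => h * auxPow h n

theorem auxPow_mul {B : Type*} [NonUnitalRing B] (h : B) (m n : ℕ) :
    auxPow h m * auxPow h n = auxPow h (m + n + 1) := by
  induction m with
  | zero => simp [auxPow]
  | succ m ih =>
    rw [auxPow, mul_assoc, ih, show m + 1 + n + 1 = (m + n + 1) + 1 by ring]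
    rfl

theorem auxPow_star {B : Type*} [NonUnitalRing B] [StarRing B] (h : B) (hs : star h = h) (m : ℕ) :
    star (auxPow h m) = auxPow h m := by
  induction m with
  | zero => simpa [auxPow] using hs
  | succ m ih =>
    rw [auxPow, star_mul, ih, hs]
    change auxPow h m * auxPow h 0 = auxPow h 0 * auxPow h m
    rw [auxPow_mul, auxPow_mul]
    congr 1
    ring

theorem auxPow_pow {B : Type*} [NonUnitalRing B] [Module ℂ B] [StarRing B] {α : B → ℝ}
    (hα : IsCStarSeminormAlg α) (h : B) (hs : star h = h) (k : ℕ) :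
    α (auxPow h (2 ^ k - 1)) = α h ^ (2 ^ k) := by
  induction k with
  | zero => simp [auxPow]
  | succ k ih =>
    have e := hα.2.2.2 (auxPow h (2 ^ k - 1))
    have hp : 0 < 2 ^ k := by positivity
    rw [auxPow_star h hs, auxPow_mul, ih,
      show 2 ^ k - 1 + (2 ^ k - 1) + 1 = 2 ^ (k + 1) - 1 by rw [pow_succ]; omega] at e
    rw [e, ← pow_mul, pow_succ]

theorem auxPow_le {B : Type*} [NonUnitalRing B] [Module ℂ B] [StarRing B] {α : B → ℝ}
    (hα : IsCStarSeminormAlg α) (h : B) (n : ℕ) :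
    α (auxPow h n) ≤ α h ^ (n + 1) := by
  induction n with
  | zero => simp [auxPow]
  | succ n ih =>
    calc α (auxPow h (n + 1)) ≤ α h * α (auxPow h n) := hα.2.2.1 _ _
      _ ≤ α h * α h ^ (n + 1) := by
        gcongr
        exact aux_nonneg hα.1 hα.2.1 _
      _ = _ := by ring

theorem aux_real {p q C : ℝ} (hp : 0 ≤ p) (hq : 0 ≤ q) (hC : 0 ≤ C)
    (H : ∀ k : ℕ, p ^ (2 ^ (k + 1)) ≤ C * q ^ (2 ^ (k + 1) - 1)) : p ≤ q := by
  by_contra hc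
  push Not at hc
  have hp0 : 0 < p := lt_of_le_of_lt hq hc
  have hr : q / p < 1 := (div_lt_one hp0).2 hc
  have hr0 : 0 ≤ q / p := by positivity
  obtain ⟨N, hN⟩ := exists_pow_lt_of_lt_one (show 0 < p / (C + 1) by positivity) hr
  have hk : N + 1 ≤ 2 ^ (N + 1) := (Nat.lt_two_pow_self).le
  have h1 := H N
  obtain ⟨m, hm⟩ : ∃ m, 2 ^ (N + 1) = m + 1 := ⟨2 ^ (N + 1) - 1, by omega⟩
  rw [hm, Nat.add_sub_cancel, pow_succ] at h1
  have h2 : (q / p) ^ m ≤ (q / p) ^ N := pow_le_pow_of_le_one hr0 hr.le (by omega)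
  have h3 : p ≤ C * (q / p) ^ m := by
    rw [div_pow, ← mul_div_assoc, le_div_iff₀ (by positivity)]
    linarith
  have h4 : (q / p) ^ m * (C + 1) < p := by
    rw [← lt_div_iff₀ (by positivity)]
    exact lt_of_le_of_lt h2 hN
  have h5 : 0 ≤ (q / p) ^ m := by positivity
  nlinarith

theorem aux_dom {B : Type*} [NonUnitalRing B] [Module ℂ B] [StarRing B] {α β : B → ℝ}
    (hα : IsCStarSeminormAlg α) (hβ : IsCStarSeminormAlg β)
    (H : ∀ h : B, ∃ C : ℝ, 0 ≤ C ∧ ∀ b, α (h * b) ≤ C * β b) (a : B) : α a ≤ β a := by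
  have na := aux_nonneg hα.1 hα.2.1
  have nb := aux_nonneg hβ.1 hβ.2.1
  have hs : star (star a * a) = star a * a := by simp
  obtain ⟨C, hC, hb⟩ := H (star a * a)
  have key : α (star a * a) ≤ β (star a * a) := by
    refine aux_real (na _) (nb _) hC fun k => ?_
    rw [← auxPow_pow hα _ hs]
    obtain ⟨m, hm⟩ : ∃ m, 2 ^ (k + 1) - 1 = m + 1 := by
      refine ⟨2 ^ (k + 1) - 2, ?_⟩
      have : 0 < 2 ^ k := by positivity
      rw [pow_succ]; omega
    rw [hm]
    refine (hb _).trans ?_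
    gcongr
    exact auxPow_le hβ _ _
  rw [hα.2.2.2, hβ.2.2.2] at key
  exact (sq_le_sq₀ (na _) (nb _)).1 key

theorem aux_inner_act (t : BasicTriple E A) (x y : E) (a : A) :
    t.inner (t.act x a) y = star a * t.inner x y := by
  rw [← t.star_inner, ← t.inner_mul, star_mul, t.star_inner]

theorem aux_act_zero (t : BasicTriple E A) (x : E) : t.act x 0 = 0 := by
  simpa using t.act_smul_right 0 x 0

theorem aux_bdd (t : BasicTriple E A) (hfull : t.Full) {γ : E → ℝ}
    (hγ : IsCStarSeminormTring t.mu γ) (a : A) :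
    ∃ C : ℝ, 0 ≤ C ∧ ∀ x, γ (t.act x a) ≤ C * γ x := by
  have n := aux_nonneg hγ.1 hγ.2.1
  have ha : a ∈ Submodule.span ℂ {a : A | ∃ x y : E, t.inner x y = a} := by
    rw [hfull]; trivial
  induction ha using Submodule.span_induction with
  | mem a h =>
    obtain ⟨y, z, rfl⟩ := h
    refine ⟨γ y * γ z, mul_nonneg (n _) (n _), fun x => ?_⟩
    have := hγ.2.2.1 x y z
    rw [BasicTriple.mu] at this
    linarith
  | zero =>
    refine ⟨0, le_rfl, fun x => ?_⟩
    rw [aux_act_zero]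
    have := hγ.2.1 0 0
    simp at this
    simp [this]
  | add a b _ _ ha hb =>
    obtain ⟨C, hC, h⟩ := ha
    obtain ⟨D, hD, h'⟩ := hb
    refine ⟨C + D, by positivity, fun x => ?_⟩
    rw [t.act_add_right]
    have := hγ.1 (t.act x a) (t.act x b)
    linarith [h x, h' x]
  | smul c a _ ha =>
    obtain ⟨C, hC, h⟩ := ha
    refine ⟨‖c‖ * C, by positivity, fun x => ?_⟩
    rw [t.act_smul_right, hγ.2.1, mul_assoc]
    gcongr
    exact h x

theorem aux_phi_bdd (t : BasicTriple E A) (hfull : t.Full) {γ : E → ℝ}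
    (hγ : IsCStarSeminormTring t.mu γ) (a : A) :
    BddAbove {s : ℝ | ∃ x : E, γ x ≤ 1 ∧ s = γ (t.act x a)} := by
  obtain ⟨C, hC, h⟩ := aux_bdd t hfull hγ a
  refine ⟨C, ?_⟩
  rintro s ⟨x, hx, rfl⟩
  nlinarith [h x]

theorem aux_phi_nonneg (t : BasicTriple E A) {γ : E → ℝ}
    (hγ : IsCStarSeminormTring t.mu γ) (a : A) : 0 ≤ PhiMap t γ a := by
  apply Real.sSup_nonneg
  rintro s ⟨x, hx, rfl⟩
  exact aux_nonneg hγ.1 hγ.2.1 _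

theorem aux_le_phi (t : BasicTriple E A) (hfull : t.Full) {γ : E → ℝ}
    (hγ : IsCStarSeminormTring t.mu γ) (x : E) (a : A) :
    γ (t.act x a) ≤ PhiMap t γ a * γ x := by
  have n := aux_nonneg hγ.1 hγ.2.1
  rcases (n x).eq_or_lt with h0 | h0
  · obtain ⟨C, hC, h⟩ := aux_bdd t hfull hγ a
    have := h x
    rw [← h0] at this ⊢
    simpa using this
  · have : γ (t.act (((γ x)⁻¹ : ℂ) • x) a) ≤ PhiMap t γ a := by
      refine le_csSup (aux_phi_bdd t hfull hγ a) ⟨_, ?_, rfl⟩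
      rw [hγ.2.1]
      simp [abs_of_pos h0, h0.ne']
    rw [t.act_smul_left, hγ.2.1, norm_inv, Complex.norm_real, Real.norm_of_nonneg h0.le,
      inv_mul_le_iff₀ h0] at this
    linarith

theorem aux_phi_le (t : BasicTriple E A) {γ : E → ℝ}
    (hγ : IsCStarSeminormTring t.mu γ) (a : A) {C : ℝ} (hC : 0 ≤ C)
    (h : ∀ x, γ (t.act x a) ≤ C * γ x) : PhiMap t γ a ≤ C := by
  refine Real.sSup_le ?_ hC
  rintro s ⟨x, hx, rfl⟩
  nlinarith [h x]

theorem aux_phi_inner (t : BasicTriple E A) {γ : E → ℝ}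
    (hγ : IsCStarSeminormTring t.mu γ) (x y : E) :
    PhiMap t γ (t.inner x y) ≤ γ x * γ y := by
  have n := aux_nonneg hγ.1 hγ.2.1
  refine aux_phi_le t hγ _ (mul_nonneg (n _) (n _)) fun z => ?_
  have := hγ.2.2.1 z x y
  rw [BasicTriple.mu] at this
  linarith

theorem aux_phi_self (t : BasicTriple E A) (hfull : t.Full) {γ : E → ℝ}
    (hγ : IsCStarSeminormTring t.mu γ) (x : E) :
    PhiMap t γ (t.inner x x) = γ x ^ 2 := by
  have n := aux_nonneg hγ.1 hγ.2.1 x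
  refine le_antisymm (by simpa [sq] using aux_phi_inner t hγ x x) ?_
  have h := aux_le_phi t hfull hγ x (t.inner x x)
  have h' := hγ.2.2.2 x
  rw [BasicTriple.mu] at h'
  rw [h'] at h
  rcases n.eq_or_lt with h0 | h0
  · rw [← h0]
    simpa using aux_phi_nonneg t hγ _
  · rw [pow_succ] at h
    exact le_of_mul_le_mul_right h h0

theorem aux_phi_alg (t : BasicTriple E A) (hfull : t.Full) {γ : E → ℝ}
    (hγ : IsCStarSeminormTring t.mu γ) : IsCStarSeminormAlg (PhiMap t γ) := by
  have n := aux_nonneg hγ.1 hγ.2.1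
  have np := aux_phi_nonneg t hγ
  have lp := aux_le_phi t hfull hγ
  have hmul : ∀ a b : A, PhiMap t γ (a * b) ≤ PhiMap t γ a * PhiMap t γ b := by
    intro a b
    refine aux_phi_le t hγ _ (mul_nonneg (np _) (np _)) fun x => ?_
    rw [← t.act_mul]
    have h1 := lp (t.act x a) b
    have h2 := mul_le_mul_of_nonneg_left (lp x a) (np b)
    linarith
  have hsm : ∀ (c : ℂ) (a : A), PhiMap t γ (c • a) ≤ ‖c‖ * PhiMap t γ a := by
    intro c a
    refine aux_phi_le t hγ _ (mul_nonneg (norm_nonneg _) (np _)) fun x => ?_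
    rw [t.act_smul_right, hγ.2.1, mul_assoc]
    gcongr
    exact lp x a
  have hsq : ∀ a : A, PhiMap t γ a ^ 2 ≤ PhiMap t γ (a * star a) := by
    intro a
    have key : PhiMap t γ a ≤ Real.sqrt (PhiMap t γ (a * star a)) := by
      refine aux_phi_le t hγ _ (Real.sqrt_nonneg _) fun x => ?_
      refine (sq_le_sq₀ (n _) (mul_nonneg (Real.sqrt_nonneg _) (n _))).1 ?_
      rw [mul_pow, Real.sq_sqrt (np _)]
      have h3 := hγ.2.2.2 (t.act x a)
      have e : t.mu (t.act x a) (t.act x a) (t.act x a)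
          = t.mu (t.act x (a * star a)) x (t.act x a) := by
        rw [BasicTriple.mu, BasicTriple.mu, aux_inner_act, t.act_mul, t.act_mul, mul_assoc]
      have h4 := hγ.2.2.1 (t.act x (a * star a)) x (t.act x a)
      rw [← e, h3] at h4
      rcases (n (t.act x a)).eq_or_lt with h0 | h0
      · rw [← h0]
        have := mul_nonneg (np (a * star a)) (sq_nonneg (γ x))
        simpa using this
      · rw [pow_succ] at h4
        have h5 := le_of_mul_le_mul_right h4 h0
        have h6 := mul_le_mul_of_nonneg_right (lp x (a * star a)) (n x)
        linarith
    calc PhiMap t γ a ^ 2 ≤ Real.sqrt (PhiMap t γ (a * star a)) ^ 2 :=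
          pow_le_pow_left₀ (np _) key 2
      _ = _ := Real.sq_sqrt (np _)
  have hst : ∀ a : A, PhiMap t γ a ≤ PhiMap t γ (star a) := by
    intro a
    have h1 := (hsq a).trans (hmul _ _)
    by_contra hc
    push Not at hc
    nlinarith [np a, np (star a)]
  have hst' : ∀ a : A, PhiMap t γ (star a) = PhiMap t γ a := fun a =>
    le_antisymm (by simpa using hst (star a)) (hst a)
  refine ⟨?_, ?_, hmul, ?_⟩
  · intro a b
    refine aux_phi_le t hγ _ (add_nonneg (np _) (np _)) fun x => ?_
    rw [t.act_add_right]
    have := hγ.1 (t.act x a) (t.act x b)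
    linarith [lp x a, lp x b]
  · intro c a
    refine le_antisymm (hsm c a) ?_
    rcases eq_or_ne c 0 with rfl | hc
    · simpa using np 0
    · have h := hsm c⁻¹ (c • a)
      rw [smul_smul, inv_mul_cancel₀ hc, one_smul, norm_inv] at h
      rwa [← le_inv_mul_iff₀ (norm_pos_iff.2 hc)]
  · intro a
    refine le_antisymm ?_ ?_
    · have := hmul (star a) a
      rw [hst'] at this
      linarith
    · have := hsq (star a)
      rwa [hst', star_star] at this

theorem aux_phi (t : BasicTriple E A) (hfull : t.Full) {γ : E → ℝ}
    (hγ : IsCStarSeminormTring t.mu γ) : IsCSSeminorm t (PhiMap t γ) := by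
  refine ⟨aux_phi_alg t hfull hγ, fun x y => ?_⟩
  rw [aux_phi_self t hfull hγ, aux_phi_self t hfull hγ, ← mul_pow]
  exact pow_le_pow_left₀ (aux_phi_nonneg t hγ _) (aux_phi_inner t hγ x y) 2

theorem aux_psi_cs (t : BasicTriple E A) {α : A → ℝ} (hα : IsCSSeminorm t α) (x y : E) :
    α (t.inner x y) ≤ PsiMap t α x * PsiMap t α y := by
  have n := aux_nonneg hα.1.1 hα.1.2.1
  rw [PsiMap, PsiMap, ← Real.sqrt_mul (n _)]
  exact Real.le_sqrt_of_sq_le (hα.2 x y)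

theorem aux_psi_sq (t : BasicTriple E A) {α : A → ℝ} (hα : IsCSSeminorm t α) (x : E) :
    PsiMap t α x ^ 2 = α (t.inner x x) :=
  Real.sq_sqrt (aux_nonneg hα.1.1 hα.1.2.1 _)

theorem aux_psi_nonneg (t : BasicTriple E A) (α : A → ℝ) (x : E) : 0 ≤ PsiMap t α x :=
  Real.sqrt_nonneg _

theorem aux_psi_act (t : BasicTriple E A) {α : A → ℝ} (hα : IsCSSeminorm t α) (x : E) (a : A) :
    PsiMap t α (t.act x a) ≤ α a * PsiMap t α x := by
  have n := aux_nonneg hα.1.1 hα.1.2.1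
  refine (sq_le_sq₀ (aux_psi_nonneg t α _) (mul_nonneg (n _) (aux_psi_nonneg t α _))).1 ?_
  rw [aux_psi_sq t hα, mul_pow, aux_psi_sq t hα, aux_inner_act, ← t.inner_mul]
  have h1 := hα.1.2.2.1 (star a) (t.inner x x * a)
  have h2 := mul_le_mul_of_nonneg_left (hα.1.2.2.1 (t.inner x x) a) (n (star a))
  rw [aux_star hα.1] at h1 h2
  linarith

theorem aux_psi (t : BasicTriple E A) {α : A → ℝ} (hα : IsCSSeminorm t α) :
    IsCStarSeminormTring t.mu (PsiMap t α) := by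
  have n := aux_nonneg hα.1.1 hα.1.2.1
  have np := aux_psi_nonneg t α
  refine ⟨fun x y => ?_, fun c x => ?_, fun x y z => ?_, fun x => ?_⟩
  · refine (sq_le_sq₀ (np _) (add_nonneg (np _) (np _))).1 ?_
    rw [aux_psi_sq t hα, t.inner_add_left, t.inner_add_right, t.inner_add_right]
    have h1 := hα.1.1 (t.inner x x + t.inner x y) (t.inner y x + t.inner y y)
    have h2 := hα.1.1 (t.inner x x) (t.inner x y)
    have h3 := hα.1.1 (t.inner y x) (t.inner y y)
    have h4 := aux_psi_cs t hα x y
    have h5 := aux_psi_cs t hα y x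
    have h6 := aux_psi_sq t hα x
    have h7 := aux_psi_sq t hα y
    nlinarith
  · rw [PsiMap, t.inner_smul_left, t.inner_smul_right, hα.1.2.1, hα.1.2.1, RCLike.norm_conj,
      ← mul_assoc, Real.sqrt_mul (by positivity), Real.sqrt_mul_self (norm_nonneg _)]
    rfl
  · have h1 := aux_psi_act t hα x (t.inner y z)
    have h2 := mul_le_mul_of_nonneg_right (aux_psi_cs t hα y z) (np x)
    rw [BasicTriple.mu]
    linarith
  · refine (sq_eq_sq₀ (np _) (pow_nonneg (np _) 3)).1 ?_
    rw [← pow_mul, show 3 * 2 = 2 * 3 by rfl, pow_mul, aux_psi_sq t hα, aux_psi_sq t hα,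
      BasicTriple.mu, aux_inner_act, ← t.inner_mul, t.star_inner]
    have hs : star (t.inner x x) = t.inner x x := t.star_inner x x
    generalize t.inner x x = b at hs
    have e1 := hα.1.2.2.2 b
    have e2 := hα.1.2.2.2 (b * b)
    rw [star_mul, hs] at e2
    rw [hs] at e1
    have h1 := hα.1.2.2.1 b (b * b)
    have h2 := hα.1.2.2.1 b (b * (b * b))
    rw [mul_assoc] at e2
    rw [e2, e1] at h2
    rw [e1] at h1
    refine le_antisymm (by linarith) ?_
    rcases (n b).eq_or_lt with h0 | h0
    · rw [← h0]
      simpa using n _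
    · refine le_of_mul_le_mul_left ?_ h0
      linarith

theorem aux_phi_dom (t : BasicTriple E A) (hfull : t.Full) {α : A → ℝ} {γ : E → ℝ}
    (hα : IsCStarSeminormAlg α) (hγ : IsCStarSeminormTring t.mu γ)
    (H : ∀ x y, α (t.inner x y) ≤ γ x * γ y) (a : A) : α a ≤ PhiMap t γ a := by
  have n := aux_nonneg hγ.1 hγ.2.1
  refine aux_dom hα (aux_phi_alg t hfull hγ) (fun h => ?_) a
  have hh : h ∈ Submodule.span ℂ {a : A | ∃ x y : E, t.inner x y = a} := by
    rw [hfull]; trivial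
  induction hh using Submodule.span_induction with
  | mem a h =>
    obtain ⟨y, z, rfl⟩ := h
    refine ⟨γ y * γ z, mul_nonneg (n _) (n _), fun b => ?_⟩
    rw [t.inner_mul]
    have h1 := H y (t.act z b)
    have h2 := mul_le_mul_of_nonneg_left (aux_le_phi t hfull hγ z b) (n y)
    linarith
  | zero =>
    refine ⟨0, le_rfl, fun x => ?_⟩
    have := hα.2.1 0 0
    simp at this
    simp [this]
  | add a b _ _ ha hb =>
    obtain ⟨C, hC, h⟩ := ha
    obtain ⟨D, hD, h'⟩ := hb
    refine ⟨C + D, by positivity, fun x => ?_⟩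
    rw [add_mul]
    have := hα.1 (a * x) (b * x)
    linarith [h x, h' x]
  | smul c a _ ha =>
    obtain ⟨C, hC, h⟩ := ha
    refine ⟨‖c‖ * C, by positivity, fun x => ?_⟩
    rw [smul_mul_assoc, hα.2.1, mul_assoc]
    gcongr
    exact h x

end helpers

/-- Let `(E, A, ⟪·,·⟫)` be a full basic triple whose
associated `*`-tring is admissible, with `E` a faithful `A`-module.  Then `Φ`
and `Ψ` are mutually inverse order-preserving bijections between the
`C*`-seminorms on `E` and the `C*`-seminorms on `A` with the Cauchy–Schwarz
property, and `Φ` restricts to a bijection between the respective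
`C*`-norms. -/
theorem stmt_9 (t : BasicTriple E A) (hfull : t.Full) (hfaith : t.Faithful)
    (hadm : ∀ x : E, t.mu x x x = 0 → x = 0) :
    (∀ γ : E → ℝ, IsCStarSeminormTring t.mu γ → IsCSSeminorm t (PhiMap t γ)) ∧
    (∀ α : A → ℝ, IsCSSeminorm t α → IsCStarSeminormTring t.mu (PsiMap t α)) ∧
    (∀ γ : E → ℝ, IsCStarSeminormTring t.mu γ → PsiMap t (PhiMap t γ) = γ) ∧
    (∀ α : A → ℝ, IsCSSeminorm t α → PhiMap t (PsiMap t α) = α) ∧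
    (∀ γ₁ γ₂ : E → ℝ, IsCStarSeminormTring t.mu γ₁ → IsCStarSeminormTring t.mu γ₂ →
      (∀ x : E, γ₁ x ≤ γ₂ x) → ∀ a : A, PhiMap t γ₁ a ≤ PhiMap t γ₂ a) ∧
    (∀ α₁ α₂ : A → ℝ, IsCSSeminorm t α₁ → IsCSSeminorm t α₂ →
      (∀ a : A, α₁ a ≤ α₂ a) → ∀ x : E, PsiMap t α₁ x ≤ PsiMap t α₂ x) ∧
    (∀ γ : E → ℝ, IsCStarSeminormTring t.mu γ →
      ((∀ x : E, γ x = 0 → x = 0) ↔ (∀ a : A, PhiMap t γ a = 0 → a = 0))) := by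
  refine ⟨fun γ hγ => aux_phi t hfull hγ, fun α hα => aux_psi t hα, fun γ hγ => ?_,
    fun α hα => ?_, fun γ₁ γ₂ h₁ h₂ hle a => ?_, fun α₁ α₂ _ _ hle x => ?_, fun γ hγ => ⟨?_, ?_⟩⟩
  · funext x
    rw [PsiMap, aux_phi_self t hfull hγ, Real.sqrt_sq (aux_nonneg hγ.1 hγ.2.1 x)]
  · funext a
    exact le_antisymm
      (aux_phi_le t (aux_psi t hα) a (aux_nonneg hα.1.1 hα.1.2.1 a)
        fun x => aux_psi_act t hα x a)
      (aux_phi_dom t hfull hα.1 (aux_psi t hα) (aux_psi_cs t hα) a)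
  · refine aux_phi_dom t hfull (aux_phi_alg t hfull h₁) h₂ (fun x y => ?_) a
    exact (aux_phi_inner t h₁ x y).trans
      (mul_le_mul (hle x) (hle y) (aux_nonneg h₁.1 h₁.2.1 y) (aux_nonneg h₂.1 h₂.2.1 x))
  · exact Real.sqrt_le_sqrt (hle _)
  · intro h a ha
    refine hfaith a fun x => h _ (le_antisymm ?_ (aux_nonneg hγ.1 hγ.2.1 _))
    have := aux_le_phi t hfull hγ x a
    rwa [ha, zero_mul] at this
  · intro h x hx
    apply hadm
    have : t.inner x x = 0 := h _ (by rw [aux_phi_self t hfull hγ, hx]; simp)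
    rw [BasicTriple.mu, this, aux_act_zero]
end
end

section
/- Let A be a complex *-algebra, I a *-ideal of A, and α a C*-seminorm on I. For a ∈ A define α'(a) := sup{α(ax) : x ∈ I, α(x) ≤ 1} ∈ [0,∞], and let L_a : I → I be the map x ↦ ax. Then the following are equivalent: (1) α'(a) < ∞ for all a ∈ A; (2) for every a ∈ A there is a constant C with α(ax) ≤ Cα(x) for all x ∈ I; (3) α extends to a C*-seminorm on A. If these conditions hold, then: (a) α' is a C*-seminorm on A extending α, and α' ≤ β for every C*-seminorm β on A extending α; (b) if α is a norm on I, then α' is a norm on A if and only if Ann_A(I) := {a ∈ A : ax = 0 for all x ∈ I} = 0. -/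
noncomputable section

open scoped ComplexConjugate

/-- Let `A` be a complex `*`-algebra, `I` a `*`-ideal of `A`
and `α` a `C*`-seminorm on `I`.  With `α'(a) := sup{α(ax) : x ∈ I, α(x) ≤ 1}`
and `L_a : I → I, x ↦ ax`, the following are equivalent: (1) `α'(a) < ∞` for
all `a`; (2) every `L_a` is bounded; (3) `α` extends to a `C*`-seminorm on `A`.
In that case `α'` is a `C*`-seminorm on `A` extending `α` which is smaller than
every such extension, and if `α` is a norm on `I` then `α'` is a norm iff
`Ann_A(I) = 0`. -/
theorem stmt_10 {A : Type*} [NonUnitalRing A] [Module ℂ A] [StarRing A]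
    [StarModule ℂ A] [IsScalarTower ℂ A A] [SMulCommClass ℂ A A]
    (I : Set A) (hzero : (0 : A) ∈ I)
    (hadd : ∀ x ∈ I, ∀ y ∈ I, x + y ∈ I)
    (hsmul : ∀ (c : ℂ), ∀ x ∈ I, c • x ∈ I)
    (hstar : ∀ x ∈ I, star x ∈ I)
    (hmull : ∀ (a : A), ∀ x ∈ I, a * x ∈ I)
    (hmulr : ∀ (a : A), ∀ x ∈ I, x * a ∈ I)
    (α : A → ℝ)
    (hα_add : ∀ x ∈ I, ∀ y ∈ I, α (x + y) ≤ α x + α y)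
    (hα_smul : ∀ (c : ℂ), ∀ x ∈ I, α (c • x) = ‖c‖ * α x)
    (hα_mul : ∀ x ∈ I, ∀ y ∈ I, α (x * y) ≤ α x * α y)
    (hα_star : ∀ x ∈ I, α (star x * x) = (α x) ^ 2) :
    -- the three conditions are equivalent
    ((∀ a : A, BddAbove {s : ℝ | ∃ x ∈ I, α x ≤ 1 ∧ s = α (a * x)}) ↔
      (∀ a : A, ∃ C : ℝ, ∀ x ∈ I, α (a * x) ≤ C * α x)) ∧
    ((∀ a : A, ∃ C : ℝ, ∀ x ∈ I, α (a * x) ≤ C * α x) ↔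
      (∃ β : A → ℝ, IsCStarSeminormAlg β ∧ ∀ x ∈ I, β x = α x)) ∧
    -- consequences, where `α' a = sSup {α (a * x) : x ∈ I, α x ≤ 1}`
    ((∀ a : A, BddAbove {s : ℝ | ∃ x ∈ I, α x ≤ 1 ∧ s = α (a * x)}) →
      -- (a) `α'` is a `C*`-seminorm on `A` extending `α`, minimal among all
      -- `C*`-seminorm extensions of `α`
      (IsCStarSeminormAlg
          (fun a : A => sSup {s : ℝ | ∃ x ∈ I, α x ≤ 1 ∧ s = α (a * x)}) ∧
        (∀ y ∈ I, sSup {s : ℝ | ∃ x ∈ I, α x ≤ 1 ∧ s = α (y * x)} = α y) ∧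
        (∀ β : A → ℝ, IsCStarSeminormAlg β → (∀ x ∈ I, β x = α x) →
          ∀ a : A, sSup {s : ℝ | ∃ x ∈ I, α x ≤ 1 ∧ s = α (a * x)} ≤ β a) ∧
        -- (b) if `α` is a norm on `I`, then `α'` is a norm iff `Ann_A(I) = 0`
        ((∀ x ∈ I, α x = 0 → x = 0) →
          ((∀ a : A,
              sSup {s : ℝ | ∃ x ∈ I, α x ≤ 1 ∧ s = α (a * x)} = 0 → a = 0) ↔
            (∀ a : A, (∀ x ∈ I, a * x = 0) → a = 0))))) := by
  have h0 : α 0 = 0 := by simpa using hα_smul 0 0 hzero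
  have hnn : ∀ x ∈ I, 0 ≤ α x := by
    intro x hx
    have h1 := hα_add x hx _ (hsmul (-1) x hx)
    rw [hα_smul (-1) x hx] at h1
    simp [h0] at h1
    linarith
  have hst1 : ∀ x ∈ I, α x ≤ α (star x) := by
    intro x hx
    have h1 := hα_mul _ (hstar x hx) x hx
    rw [hα_star x hx] at h1
    have h2 := hnn x hx
    have h3 := hnn _ (hstar x hx)
    rcases h2.eq_or_lt with h | h
    · rw [← h]; exact h3
    · nlinarith
  have hst : ∀ x ∈ I, α (star x) = α x := by
    intro x hx
    have h1 := hst1 _ (hstar x hx)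
    rw [star_star] at h1
    exact le_antisymm h1 (hst1 x hx)
  have key1 : ∀ a : A, BddAbove {s : ℝ | ∃ x ∈ I, α x ≤ 1 ∧ s = α (a * x)} →
      ∀ x ∈ I, α (a * x) ≤ sSup {s : ℝ | ∃ x ∈ I, α x ≤ 1 ∧ s = α (a * x)} * α x := by
    intro a hb x hx
    have hs : ∀ t : ℝ, 0 ≤ t → t * α x ≤ 1 →
        t * α (a * x) ≤ sSup {s : ℝ | ∃ x ∈ I, α x ≤ 1 ∧ s = α (a * x)} := by
      intro t ht h1
      refine le_csSup hb ⟨(t : ℂ) • x, hsmul _ x hx, ?_, ?_⟩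
      · rw [hα_smul _ x hx]; simpa [abs_of_nonneg ht] using h1
      · rw [mul_smul_comm, hα_smul _ _ (hmull a x hx)]; simp [abs_of_nonneg ht]
    generalize sSup {s : ℝ | ∃ x ∈ I, α x ≤ 1 ∧ s = α (a * x)} = S at hs
    have h2 := hnn x hx
    have h3 := hnn _ (hmull a x hx)
    rcases h2.eq_or_lt with h | h
    · rw [← h, mul_zero]
      by_contra! hc
      have h4 := hs ((|S| + 1) / α (a * x)) (by positivity) (by rw [← h]; simp)
      rw [div_mul_cancel₀ _ hc.ne'] at h4
      linarith [le_abs_self S]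
    · have h4 := hs (α x)⁻¹ (by positivity) (by rw [inv_mul_cancel₀ h.ne'])
      rwa [inv_mul_le_iff₀ h, mul_comm] at h4
  have key2 : ∀ (a : A) (M : ℝ), 0 ≤ M → (∀ x ∈ I, α (a * x) ≤ M * α x) →
      sSup {s : ℝ | ∃ x ∈ I, α x ≤ 1 ∧ s = α (a * x)} ≤ M := by
    intro a M hM h
    refine csSup_le ⟨_, 0, hzero, by rw [h0]; norm_num, rfl⟩ ?_
    rintro s ⟨x, hx, h1, rfl⟩
    have := h x hx
    nlinarith
  have key3 : ∀ a : A, 0 ≤ sSup {s : ℝ | ∃ x ∈ I, α x ≤ 1 ∧ s = α (a * x)} := by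
    intro a
    apply Real.sSup_nonneg
    rintro s ⟨x, hx, h1, rfl⟩
    exact hnn _ (hmull a x hx)
  have e12 : (∀ a : A, BddAbove {s : ℝ | ∃ x ∈ I, α x ≤ 1 ∧ s = α (a * x)}) ↔
      (∀ a : A, ∃ C : ℝ, ∀ x ∈ I, α (a * x) ≤ C * α x) := by
    constructor
    · intro h a
      exact ⟨_, key1 a (h a)⟩
    · intro h a
      obtain ⟨C, hC⟩ := h a
      refine ⟨|C|, ?_⟩
      rintro s ⟨x, hx, h1, rfl⟩
      have h2 := hC x hx
      have h3 := hnn x hx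
      nlinarith [le_abs_self C, abs_nonneg C]
  have main : (∀ a : A, BddAbove {s : ℝ | ∃ x ∈ I, α x ≤ 1 ∧ s = α (a * x)}) →
      (IsCStarSeminormAlg
          (fun a : A => sSup {s : ℝ | ∃ x ∈ I, α x ≤ 1 ∧ s = α (a * x)}) ∧
        (∀ y ∈ I, sSup {s : ℝ | ∃ x ∈ I, α x ≤ 1 ∧ s = α (y * x)} = α y)) := by
    intro hb
    have k1 := fun a => key1 a (hb a)
    clear key1
    generalize hp : (fun a : A => sSup {s : ℝ | ∃ x ∈ I, α x ≤ 1 ∧ s = α (a * x)}) = p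
    have hp' : ∀ a : A, sSup {s : ℝ | ∃ x ∈ I, α x ≤ 1 ∧ s = α (a * x)} = p a :=
      fun a => congrFun hp a
    simp only [hp'] at k1 key2 key3 ⊢
    have pmul : ∀ a b : A, p (a * b) ≤ p a * p b := by
      intro a b
      refine key2 _ _ (mul_nonneg (key3 a) (key3 b)) fun x hx => ?_
      rw [mul_assoc, mul_assoc]
      exact (k1 a _ (hmull b x hx)).trans (mul_le_mul_of_nonneg_left (k1 b x hx) (key3 a))
    have psm : ∀ (c : ℂ) (a : A), p (c • a) ≤ ‖c‖ * p a := by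
      intro c a
      refine key2 _ _ (mul_nonneg (norm_nonneg c) (key3 a)) fun x hx => ?_
      rw [smul_mul_assoc, hα_smul _ _ (hmull a x hx), mul_assoc]
      exact mul_le_mul_of_nonneg_left (k1 a x hx) (norm_nonneg c)
    have psq : ∀ a : A, p a ^ 2 ≤ p (star a * a) := by
      intro a
      have : p a ≤ √(p (star a * a)) := by
        refine key2 _ _ (Real.sqrt_nonneg _) fun x hx => ?_
        have hax := hmull a x hx
        have h1 := hα_star _ hax
        rw [star_mul, mul_assoc, ← mul_assoc (star a)] at h1
        have h2 := hα_mul _ (hstar x hx) _ (hmull (star a * a) x hx)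
        rw [h1, hst x hx] at h2
        have h3 := mul_le_mul_of_nonneg_left (k1 (star a * a) x hx) (hnn x hx)
        refine (sq_le_sq₀ (hnn _ hax) (mul_nonneg (Real.sqrt_nonneg _) (hnn x hx))).1 ?_
        rw [mul_pow, Real.sq_sqrt (key3 _)]
        linarith
      exact (Real.le_sqrt (key3 a) (key3 _)).1 this
    have pst1 : ∀ a : A, p a ≤ p (star a) := by
      intro a
      have h1 := (psq a).trans (pmul _ _)
      rcases (key3 a).eq_or_lt with h | h
      · rw [← h]; exact key3 _
      · nlinarith
    refine ⟨⟨?_, ?_, pmul, ?_⟩, ?_⟩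
    · intro a b
      refine key2 _ _ (add_nonneg (key3 a) (key3 b)) fun x hx => ?_
      rw [add_mul, add_mul]
      exact (hα_add _ (hmull a x hx) _ (hmull b x hx)).trans
        (add_le_add (k1 a x hx) (k1 b x hx))
    · intro c a
      refine le_antisymm (psm c a) ?_
      by_cases hc : c = 0
      · simpa [hc] using key3 0
      · have h1 := psm c⁻¹ (c • a)
        rw [smul_smul, inv_mul_cancel₀ hc, one_smul, norm_inv] at h1
        have : 0 < ‖c‖ := norm_pos_iff.2 hc
        rwa [le_inv_mul_iff₀ this] at h1
    · intro a
      refine le_antisymm ((pmul _ _).trans ?_) (psq a)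
      have h1 := pst1 (star a)
      rw [star_star] at h1
      nlinarith [key3 a]
    · intro y hy
      refine le_antisymm (key2 y _ (hnn y hy) fun x hx => hα_mul y hy x hx) ?_
      have h1 := hα_star _ (hstar y hy)
      have h2 := k1 y _ (hstar y hy)
      rw [star_star] at h1
      rw [h1, hst y hy] at h2
      rcases (hnn y hy).eq_or_lt with h | h
      · rw [← h]; exact key3 _
      · nlinarith
  refine ⟨e12, ⟨fun h => ?_, ?_⟩, fun hb => ⟨(main hb).1, (main hb).2, ?_, ?_⟩⟩
  · exact ⟨_, main (e12.2 h)⟩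
  · rintro ⟨β, hβ, hext⟩ a
    refine ⟨β a, fun x hx => ?_⟩
    rw [← hext x hx, ← hext _ (hmull a x hx)]
    exact hβ.2.2.1 a x
  · intro β hβ hext a
    have hβa : 0 ≤ β a := by
      have h1 := hβ.1 a ((-1 : ℂ) • a)
      rw [hβ.2.1] at h1
      simp [hext 0 hzero, h0] at h1
      linarith
    refine key2 a _ hβa fun x hx => ?_
    rw [← hext x hx, ← hext _ (hmull a x hx)]
    exact hβ.2.2.1 a x
  · intro hn
    constructor
    · intro h a ha
      refine h a (le_antisymm (key2 a 0 le_rfl fun x hx => ?_) (key3 a))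
      rw [ha x hx, h0, zero_mul]
    · intro h a ha
      refine h a fun x hx => hn _ (hmull a x hx) ?_
      have h1 := key1 a (hb a) x hx
      rw [ha, zero_mul] at h1
      exact le_antisymm h1 (hnn _ (hmull a x hx))
end
end

section
/- Let A be a Banach *-algebra and I a *-ideal of A, not necessarily closed. Then any C*-seminorm on I can be extended to a C*-seminorm on A. If I is dense in A, such an extension is unique. -/
noncomputable section

open scoped ComplexConjugate

namespace Stmt11
set_option linter.unusedSectionVars false

structure CSI {A : Type*} [NonUnitalNormedRing A] [NormedSpace ℂ A] [StarRing A]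
    (I : Set A) (α : A → ℝ) : Prop where
  zero : (0 : A) ∈ I
  add : ∀ x ∈ I, ∀ y ∈ I, x + y ∈ I
  smul : ∀ (c : ℂ), ∀ x ∈ I, c • x ∈ I
  star : ∀ x ∈ I, star x ∈ I
  mull : ∀ (a : A), ∀ x ∈ I, a * x ∈ I
  mulr : ∀ (a : A), ∀ x ∈ I, x * a ∈ I
  aadd : ∀ x ∈ I, ∀ y ∈ I, α (x + y) ≤ α x + α y
  asmul : ∀ (c : ℂ), ∀ x ∈ I, α (c • x) = ‖c‖ * α x
  amul : ∀ x ∈ I, ∀ y ∈ I, α (x * y) ≤ α x * α y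
  astar : ∀ x ∈ I, α (Star.star x * x) = (α x) ^ 2

section
variable {A : Type*} [NonUnitalNormedRing A] [NormedSpace ℂ A]
    [CompleteSpace A] [StarRing A] [NormedStarGroup A] [StarModule ℂ A]
    [IsScalarTower ℂ A A] [SMulCommClass ℂ A A] {I : Set A} {α : A → ℝ}

lemma le_of_sq_le_sq' {a b : ℝ} (h : a^2 ≤ b^2) (hb : 0 ≤ b) : a ≤ b := by
  by_contra hlt
  nlinarith

lemma CSI.neg_mem (H : CSI I α) {x : A} (hx : x ∈ I) : -x ∈ I := by
  have := H.smul (-1) x hx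
  simpa using this

lemma CSI.aneg (H : CSI I α) {x : A} (hx : x ∈ I) : α (-x) = α x := by
  have := H.asmul (-1) x hx
  simpa using this

lemma CSI.azero (H : CSI I α) : α 0 = 0 := by
  have := H.asmul 0 0 H.zero
  simpa using this

lemma CSI.nonneg (H : CSI I α) {x : A} (hx : x ∈ I) : 0 ≤ α x := by
  have := H.aadd x hx _ (H.neg_mem hx)
  rw [H.aneg hx, add_neg_cancel, H.azero] at this
  linarith

lemma CSI.star_le (H : CSI I α) {x : A} (hx : x ∈ I) : α x ≤ α (Star.star x) := by
  have h1 := H.amul _ (H.star x hx) x hx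
  rw [H.astar x hx] at h1
  have h2 := H.nonneg hx
  have h3 := H.nonneg (H.star x hx)
  by_contra hlt
  nlinarith

lemma CSI.star_eq (H : CSI I α) {x : A} (hx : x ∈ I) : α (Star.star x) = α x := by
  apply le_antisymm _ (H.star_le hx)
  simpa using H.star_le (H.star x hx)

lemma CSI.pos (H : CSI I α) {a b : A} (ha : a ∈ I) (hb : b ∈ I) (sa : Star.star a = a)
    (sb : Star.star b = b) (hab : a * b = b * a) : (α a)^2 ≤ α (a * a + b * b) := by
  set z := a + Complex.I • b with hz
  have hib := H.smul Complex.I b hb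
  have hzI : z ∈ I := H.add _ ha _ hib
  have hsz : Star.star z = a + (-Complex.I) • b := by
    simp [hz, star_add, star_smul, sa, sb]
  have h1 : Star.star z * z = a * a + b * b := by
    rw [hsz, hz]
    simp only [add_mul, mul_add, smul_mul_assoc, mul_smul_comm, hab]
    have : Complex.I • Complex.I • (b * b) = -(b * b) := by rw [smul_smul]; simp
    simp only [neg_smul, smul_add, smul_neg, this]
    abel
  rw [← h1, H.astar z hzI]
  have h2 : (2:ℂ) • a = z + Star.star z := by
    rw [hsz, hz, two_smul]; simp; abel
  have h3 := H.aadd _ hzI _ (H.star z hzI)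
  rw [← h2, H.asmul _ _ ha, H.star_eq hzI] at h3
  have h4 := H.nonneg ha
  simp at h3
  have : α a ≤ α z := by linarith
  gcongr

open Polynomial

/-- evaluation -/
def ev {B : Type*} [Ring B] (x : B) : ℤ[X] →+* B := (aeval x : ℤ[X] →ₐ[ℤ] B).toRingHom

lemma ev_X {B : Type*} [Ring B] (x : B) : ev x X = x := by simp [ev]

lemma ev_star {B : Type*} [Ring B] [StarRing B] (x : B) (hx : Star.star x = x) (p : ℤ[X]) :
    Star.star (ev x p) = ev x p := by
  induction p using Polynomial.induction_on' with
  | add p q hp hq => rw [map_add, star_add, hp, hq]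
  | monomial n a =>
    simp [ev, aeval_monomial, hx, (Int.cast_commute a (x ^ n)).eq]

lemma id1 {R : Type*} [CommRing R] (t w c : R) :
    t * (w * c + w * c) * (w * c + w * c) + t * (c - w^2*c) * (c - w^2*c)
          = t * (c + w^2*c) * (c + w^2 * c) := by ring

/-- evaluation of `X * p` at `x` -/
def fe (x : A) (p : ℤ[X]) : A := (ev (x : Unitization ℂ A) (X * p)).snd

lemma fe_coe (x : A) (p : ℤ[X]) : ((fe x p : A) : Unitization ℂ A) =
    ev (x : Unitization ℂ A) (X * p) := by
  ext
  · simp [ev_X]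
  · simp [fe]

lemma fe_add (x : A) (p q : ℤ[X]) : fe x (p + q) = fe x p + fe x q := by
  simp only [fe, mul_add, map_add, Unitization.snd_add]

lemma fe_sub (x : A) (p q : ℤ[X]) : fe x (p - q) = fe x p - fe x q := by
  rw [eq_sub_iff_add_eq, ← fe_add, sub_add_cancel]

lemma fe_mul (x : A) (p q : ℤ[X]) : fe x p * fe x q = fe x (X * p * q) := by
  apply Unitization.inr_injective (R := ℂ)
  rw [Unitization.inr_mul, fe_coe, fe_coe, fe_coe, ← map_mul]
  congr 1
  ring

lemma fe_one (x : A) : fe x 1 = x := by simp [fe, ev_X]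

lemma CSI.fe_mem (H : CSI I α) {x : A} (hx : x ∈ I) (p : ℤ[X]) : fe x p ∈ I := by
  simp only [fe, map_mul, ev_X, Unitization.snd_mul, Unitization.fst_inr, Unitization.snd_inr,
    zero_smul, zero_add]
  exact H.add _ (H.smul _ _ hx) _ (H.mulr _ _ hx)

lemma fe_star (x : A) (hx : Star.star x = x) (p : ℤ[X]) : Star.star (fe x p) = fe x p := by
  apply Unitization.inr_injective (R := ℂ)
  rw [Unitization.inr_star, fe_coe]
  apply ev_star
  rw [← Unitization.inr_star, hx]

lemma CSI.sq (H : CSI I α) {x : A} (hx : x ∈ I) (sx : Star.star x = x) :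
    α (x * x) = (α x)^2 := by
  have := H.astar x hx
  rwa [sx] at this

lemma CSI.key (H : CSI I α) {x : A} (hx : x ∈ I) (sx : Star.star x = x) (h1 : α x = 1) :
    1 ≤ ‖x‖ := by
  by_contra! hlt
  have hm := fun p => H.fe_mem hx p
  have anti : ∀ p : ℕ, α (fe x (X^(p+1))) ≤ α (fe x (X^p)) := by
    intro p
    have := H.amul _ (hm (X^p)) _ (hm 1)
    rw [fe_mul, fe_one, h1, mul_one, mul_one] at this
    rwa [pow_succ']
  have hanti : Antitone (fun p : ℕ => α (fe x (X^p))) := antitone_nat_of_succ_le anti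
  have hle : ∀ p : ℕ, α (fe x (X^p)) ≤ 1 := by
    intro p
    have := hanti (Nat.zero_le p)
    simpa [fe_one, h1] using this
  have hpow : ∀ n : ℕ, α (fe x (X^(2^n-1))) = 1 := by
    intro n
    induction n with
    | zero => simp [fe_one, h1]
    | succ n ih =>
      have e := H.sq (hm (X^(2^n-1))) (fe_star x sx _)
      rw [ih, fe_mul] at e
      have : (X * X^(2^n-1) * X^(2^n-1) : ℤ[X]) = X^(2^(n+1)-1) := by
        rw [← pow_succ', ← pow_add]
        congr 1
        have := Nat.one_le_two_pow (n := n)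
        rw [pow_succ]; omega
      rw [this] at e
      simpa using e
  have hge : ∀ p : ℕ, 1 ≤ α (fe x (X^p)) := by
    intro p
    rw [← hpow p]
    apply hanti
    have := Nat.lt_two_pow_self (n := p)
    omega
  have hE : ∀ k p : ℕ, (2:ℝ)^k ≤ α (fe x (X^p * ∑ i ∈ Finset.range (2^k), (X^2)^i)) := by
    intro k
    induction k with
    | zero => intro p; simpa using hge p
    | succ k ih =>
      intro p
      set c : ℤ[X] := X^p * ∑ i ∈ Finset.range (2^k), (X^2)^i with hc
      set w : ℤ[X] := X^(2^k) with hw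
      have e1 : (X^p * ∑ i ∈ Finset.range (2^(k+1)), (X^2)^i : ℤ[X]) = c + w^2 * c := by
        rw [pow_succ 2 k, mul_two, Finset.sum_range_add, hc, hw]
        simp only [pow_add, ← Finset.mul_sum]
        rw [← pow_mul X 2, ← pow_mul X _ 2, mul_comm 2 (2^k)]
        ring
      rw [e1]
      have ih' := ih (2^k + p)
      have e2 : (X^(2^k+p) * ∑ i ∈ Finset.range (2^k), (X^2)^i : ℤ[X]) = w * c := by
        rw [hc, hw]; ring
      rw [e2] at ih'
      have hp := H.pos (hm (w * c + w * c)) (hm (c - w^2*c)) (fe_star x sx _) (fe_star x sx _)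
        (by rw [fe_mul, fe_mul, mul_right_comm])
      have e3 : fe x (w * c + w * c) * fe x (w * c + w * c) + fe x (c - w^2*c) * fe x (c - w^2*c)
          = fe x (c + w^2*c) * fe x (c + w^2 * c) := by
        rw [fe_mul, fe_mul, fe_mul, ← fe_add, id1]
      rw [e3, H.sq (hm _) (fe_star x sx _)] at hp
      have h5 := le_of_sq_le_sq' hp (H.nonneg (hm _))
      have e4 : α (fe x (w * c + w * c)) = 2 * α (fe x (w * c)) := by
        rw [fe_add, ← two_smul ℂ, H.asmul _ _ (hm _)]; simp
      rw [e4] at h5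
      rw [pow_succ]; linarith
  set h := x * x with hh
  have hhI : h ∈ I := H.mull _ _ hx
  have hhn : ‖h‖ < 1 := by
    have := norm_mul_le x x
    have := norm_nonneg x
    nlinarith
  obtain ⟨y, hy⟩ : ∃ y, y = h + y * h := by
    have hc : ContractingWith ‖h‖₊ (fun y => h + y * h) := by
      refine ⟨by exact_mod_cast hhn, LipschitzWith.of_dist_le_mul fun a b => ?_⟩
      rw [dist_eq_norm, dist_eq_norm, add_sub_add_left_eq_sub, ← sub_mul, mul_comm]
      exact norm_mul_le _ _
    exact ⟨_, hc.fixedPoint_isFixedPt.symm⟩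
  have hyI : y ∈ I := by
    rw [hy]; exact H.add _ hhI _ (H.mull _ _ hhI)
  have hfin : ∀ k : ℕ, (2:ℝ)^k ≤ 2 * (1 + α y) := by
    intro k
    have e0 := hE k 0
    rw [pow_zero, one_mul] at e0
    set s : ℤ[X] := ∑ i ∈ Finset.range (2^k), (X^2)^i with hs
    set e := fe x s with he
    set d := fe x (1 - X^(2*2^k)) with hd
    have hde : d = e - h * e := by
      have : h = fe x X := by rw [hh, ← fe_one x, fe_mul, fe_one]; simp
      rw [this, he, fe_mul, ← fe_sub, hd]
      congr 1
      have := mul_neg_geom_sum (X^2 : ℤ[X]) (2^k)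
      rw [← pow_mul, ← hs] at this
      rw [← this]; ring
    have hdI : d ∈ I := hm _
    have hee : e = d + y * d := by
      have : y * h = y - h := by rw [eq_sub_iff_add_eq, add_comm]; exact hy.symm
      rw [hde, mul_sub, ← mul_assoc, this, sub_mul]
      abel
    have hd2 : α d ≤ 2 := by
      rw [hd, fe_sub, sub_eq_add_neg]
      have := H.aadd _ (hm 1) _ (H.neg_mem (hm (X^(2*2^k))))
      rw [H.aneg (hm _)] at this
      have h2 := hle (2*2^k)
      rw [fe_one, h1] at this
      rw [fe_one]
      linarith
    have t1 := H.aadd _ hdI _ (H.mull y d hdI)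
    rw [← hee] at t1
    have t2 := H.amul _ hyI _ hdI
    have t3 := H.nonneg hyI
    nlinarith
  obtain ⟨n, hn⟩ := pow_unbounded_of_one_lt (2 * (1 + α y)) (one_lt_two)
  exact absurd (hfin n) (not_le.mpr hn)

lemma CSI.le_norm (H : CSI I α) {x : A} (hx : x ∈ I) (sx : Star.star x = x) : α x ≤ ‖x‖ := by
  by_cases h0 : α x = 0
  · rw [h0]; exact norm_nonneg _
  have hp : 0 < α x := lt_of_le_of_ne (H.nonneg hx) (Ne.symm h0)
  have := H.key (x := (((α x)⁻¹ : ℝ) : ℂ) • x) (H.smul _ _ hx)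
    (by rw [star_smul, sx]; simp) (by
      rw [H.asmul _ _ hx, Complex.norm_real, Real.norm_of_nonneg (by positivity)]
      exact inv_mul_cancel₀ h0)
  rw [norm_smul, Complex.norm_real, Real.norm_of_nonneg (by positivity)] at this
  rwa [← div_eq_inv_mul, one_le_div hp] at this

lemma CSI.le_norm' (H : CSI I α) {x : A} (hx : x ∈ I) : α x ≤ ‖x‖ := by
  have h1 := H.le_norm (H.mull (Star.star x) x hx) (by simp)
  rw [H.astar x hx] at h1
  have h2 := norm_mul_le (Star.star x) x
  rw [norm_star] at h2
  exact le_of_sq_le_sq' (by nlinarith) (norm_nonneg x)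

lemma seq_lemma (t : ℕ → ℝ) (s K B : ℝ) (hs : 0 ≤ s) (hB : 0 ≤ B) (ht : ∀ n, 0 ≤ t n)
    (h1 : ∀ n, t n ^ 2 ≤ s * t (n+1)) (h2 : ∀ n, t n ≤ K * B^(2^n)) : t 0 ≤ s * B := by
  have h3 : ∀ n, s * t 0 ^ (2^n) ≤ s^(2^n) * t n := by
    intro n
    induction n with
    | zero => simp
    | succ n ih =>
      rcases hs.eq_or_lt with rfl | hs
      · simp
      refine le_of_mul_le_mul_left ?_ hs
      calc s * (s * t 0 ^ (2^(n+1))) = (s * t 0 ^ (2^n))^2 := by rw [pow_succ 2 n, pow_mul]; ring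
        _ ≤ (s^(2^n) * t n)^2 := by
          have := ht 0
          gcongr
        _ = (s^(2^n))^2 * t n ^ 2 := by ring
        _ ≤ (s^(2^n))^2 * (s * t (n+1)) := by gcongr; exact h1 n
        _ = _ := by rw [pow_succ 2 n, pow_mul]; ring
  by_contra! hlt
  rcases hs.eq_or_lt with rfl | hs
  · have := h1 0
    have := ht 0
    nlinarith
  have h0 : 0 < t 0 := lt_of_le_of_lt (by positivity) hlt
  set r := s * B / t 0 with hr
  have hr0 : 0 ≤ r := by positivity
  have hr1 : r < 1 := by rw [hr, div_lt_one h0]; exact hlt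
  have h4 : ∀ n, s ≤ K * r^(2^n) := by
    intro n
    have h5 := (h3 n).trans (mul_le_mul_of_nonneg_left (h2 n) (by positivity))
    rw [hr, div_pow, mul_pow, mul_div_assoc', le_div_iff₀ (by positivity)]
    linarith
  have h6 : Filter.Tendsto (fun n : ℕ => K * r^(2^n)) Filter.atTop (nhds (K * 0)) :=
    ((tendsto_pow_atTop_nhds_zero_of_lt_one hr0 hr1).comp
      (tendsto_pow_atTop_atTop_of_one_lt (one_lt_two : (1:ℕ) < 2))).const_mul K
  have := ge_of_tendsto' h6 h4
  linarith

lemma CSI.bdd (H : CSI I α) {x : A} (hx : x ∈ I) (a : A) : α (a * x) ≤ ‖a‖ * α x := by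
  have hsa : ∀ b : A, Star.star b = b → α (b * x) ≤ α x * ‖b‖ := by
    intro b sb
    let c : ℕ → A := fun n => Nat.rec b (fun _ c => c * c) n
    have c0 : c 0 = b := rfl
    have cs : ∀ n, c (n+1) = c n * c n := fun _ => rfl
    have sc : ∀ n, Star.star (c n) = c n := by
      intro n
      induction n with
      | zero => exact sb
      | succ n ih => rw [cs, star_mul, ih]
    have nc : ∀ n, ‖c n‖ ≤ ‖b‖^(2^n) := by
      intro n
      induction n with
      | zero => simp [c0]
      | succ n ih =>
        rw [cs, pow_succ, pow_mul, pow_two]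
        exact (norm_mul_le _ _).trans (by gcongr)
    refine seq_lemma (fun n => α (c n * x)) (α x) ‖x‖ ‖b‖ (H.nonneg hx) (norm_nonneg _)
      (fun n => H.nonneg (H.mull _ _ hx)) (fun n => ?_) (fun n => ?_)
    · rw [← H.astar _ (H.mull _ _ hx), star_mul, sc, mul_assoc, ← mul_assoc (c n), ← cs]
      exact (H.amul _ (H.star x hx) _ (H.mull _ _ hx)).trans (by rw [H.star_eq hx])
    · refine (H.le_norm' (H.mull _ _ hx)).trans ((norm_mul_le _ _).trans ?_)
      rw [mul_comm]
      gcongr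
      exact nc n
  have h1 := hsa (Star.star a * a) (by simp)
  have h2 := H.astar _ (H.mull a x hx)
  rw [star_mul, mul_assoc, ← mul_assoc _ a] at h2
  have h3 := H.amul _ (H.star x hx) _ (H.mull (Star.star a * a) x hx)
  rw [H.star_eq hx, h2] at h3
  have h4 := norm_mul_le (Star.star a) a
  rw [norm_star] at h4
  have h5 := H.nonneg hx
  refine le_of_sq_le_sq' ?_ (by positivity)
  calc α (a * x) ^ 2 ≤ α x * (α x * ‖Star.star a * a‖) := h3.trans (by gcongr)
    _ ≤ α x * (α x * (‖a‖ * ‖a‖)) := by gcongr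
    _ = _ := by ring

/-- the extension -/
def ext (I : Set A) (α : A → ℝ) (a : A) : ℝ := sSup {r | ∃ x ∈ I, α x ≤ 1 ∧ r = α (a * x)}

lemma CSI.ext_bdd (H : CSI I α) (a : A) : BddAbove {r | ∃ x ∈ I, α x ≤ 1 ∧ r = α (a * x)} := by
  refine ⟨‖a‖, ?_⟩
  rintro r ⟨x, hx, h1, rfl⟩
  refine (H.bdd hx a).trans ?_
  have := norm_nonneg a
  nlinarith

lemma CSI.ext_nonneg (H : CSI I α) (a : A) : 0 ≤ ext I α a := by
  apply Real.sSup_nonneg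
  rintro r ⟨x, hx, h1, rfl⟩
  exact H.nonneg (H.mull _ _ hx)

lemma CSI.ext_le (H : CSI I α) (a : A) {C : ℝ} (hC0 : 0 ≤ C)
    (hC : ∀ x ∈ I, α (a * x) ≤ C * α x) : ext I α a ≤ C := by
  refine Real.sSup_le ?_ hC0
  rintro r ⟨x, hx, h1, rfl⟩
  refine (hC x hx).trans ?_
  nlinarith

lemma CSI.le_ext (H : CSI I α) (a : A) {x : A} (hx : x ∈ I) : α (a * x) ≤ ext I α a * α x := by
  by_cases h0 : α x = 0
  · have := H.bdd hx a
    rw [h0, mul_zero] at *; exact this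
  have hp : 0 < α x := lt_of_le_of_ne (H.nonneg hx) (Ne.symm h0)
  have hn : ‖(((α x)⁻¹ : ℝ) : ℂ)‖ = (α x)⁻¹ := by
    rw [Complex.norm_real, Real.norm_of_nonneg (by positivity)]
  have : (α x)⁻¹ * α (a * x) ≤ ext I α a := by
    refine le_csSup (H.ext_bdd a) ⟨(((α x)⁻¹ : ℝ) : ℂ) • x, H.smul _ _ hx, ?_, ?_⟩
    · rw [H.asmul _ _ hx, hn, inv_mul_cancel₀ h0]
    · rw [mul_smul_comm, H.asmul _ _ (H.mull _ _ hx), hn]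
  rwa [← div_eq_inv_mul, div_le_iff₀ hp] at this

lemma CSI.ext_mul (H : CSI I α) (a b : A) : ext I α (a * b) ≤ ext I α a * ext I α b := by
  refine H.ext_le _ (mul_nonneg (H.ext_nonneg a) (H.ext_nonneg b)) fun x hx => ?_
  rw [mul_assoc, mul_assoc]
  exact (H.le_ext a (H.mull b x hx)).trans
    (mul_le_mul_of_nonneg_left (H.le_ext b hx) (H.ext_nonneg a))

lemma CSI.ext_sq_le (H : CSI I α) (a : A) : ext I α a ^ 2 ≤ ext I α (Star.star a * a) := by
  have h0 := H.ext_nonneg (Star.star a * a)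
  rw [← Real.le_sqrt (H.ext_nonneg a) h0]
  refine H.ext_le _ (Real.sqrt_nonneg _) fun x hx => ?_
  have h2 := H.astar _ (H.mull a x hx)
  rw [star_mul, mul_assoc, ← mul_assoc _ a] at h2
  have h3 := H.amul _ (H.star x hx) _ (H.mull (Star.star a * a) x hx)
  rw [H.star_eq hx, h2] at h3
  have h5 := H.nonneg hx
  refine le_of_sq_le_sq' ?_ (by positivity)
  rw [mul_pow, Real.sq_sqrt h0]
  have := mul_le_mul_of_nonneg_left (H.le_ext (Star.star a * a) hx) h5
  nlinarith

lemma CSI.ext_star_le (H : CSI I α) (a : A) : ext I α a ≤ ext I α (Star.star a) := by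
  have h1 := (H.ext_sq_le a).trans (H.ext_mul _ _)
  have h2 := H.ext_nonneg a
  have h3 := H.ext_nonneg (Star.star a)
  by_contra hlt
  nlinarith

lemma CSI.ext_isCStar (H : CSI I α) : IsCStarSeminormAlg (ext I α) := by
  have hsm : ∀ (c : ℂ) (a : A), ext I α (c • a) ≤ ‖c‖ * ext I α a := by
    intro c a
    refine H.ext_le _ (mul_nonneg (norm_nonneg _) (H.ext_nonneg a)) fun x hx => ?_
    rw [smul_mul_assoc, H.asmul _ _ (H.mull _ _ hx), mul_assoc]
    exact mul_le_mul_of_nonneg_left (H.le_ext a hx) (norm_nonneg _)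
  refine ⟨fun a b => ?_, fun c a => ?_, H.ext_mul, fun a => ?_⟩
  · refine H.ext_le _ (add_nonneg (H.ext_nonneg a) (H.ext_nonneg b)) fun x hx => ?_
    rw [add_mul, add_mul]
    exact (H.aadd _ (H.mull _ _ hx) _ (H.mull _ _ hx)).trans
      (add_le_add (H.le_ext a hx) (H.le_ext b hx))
  · apply le_antisymm (hsm c a)
    by_cases hc : c = 0
    · simp [hc, H.ext_nonneg]
    have := hsm c⁻¹ (c • a)
    rw [smul_smul, inv_mul_cancel₀ hc, one_smul, norm_inv] at this
    have hp := norm_pos_iff.mpr hc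
    rwa [← div_eq_inv_mul, le_div_iff₀ hp, mul_comm] at this
  · apply le_antisymm _ (H.ext_sq_le a)
    have h1 := H.ext_mul (Star.star a) a
    have h2 := H.ext_star_le (Star.star a)
    rw [star_star] at h2
    have := H.ext_nonneg a
    nlinarith

lemma CSI.ext_eq (H : CSI I α) {x : A} (hx : x ∈ I) : ext I α x = α x := by
  apply le_antisymm
  · exact H.ext_le _ (H.nonneg hx) fun y hy => H.amul _ hx _ hy
  · have h1 := H.le_ext x (H.star x hx)
    have h2 := H.astar _ (H.star x hx)
    rw [star_star, H.star_eq hx] at h2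
    rw [h2, H.star_eq hx] at h1
    have := H.nonneg hx
    have := H.ext_nonneg x
    by_contra hlt
    nlinarith

lemma csi_univ {β : A → ℝ} (h : IsCStarSeminormAlg β) : CSI Set.univ β := by
  obtain ⟨h1, h2, h3, h4⟩ := h
  constructor <;> simp_all

lemma cont {β : A → ℝ} (h : IsCStarSeminormAlg β) : Continuous β := by
  have H := csi_univ h
  have key : ∀ a b, β a - β b ≤ ‖a - b‖ := by
    intro a b
    have h1 := H.aadd (a - b) trivial b trivial
    have h2 := H.le_norm' (x := a - b) trivial
    rw [sub_add_cancel] at h1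
    linarith
  have : LipschitzWith 1 β := by
    refine LipschitzWith.of_dist_le_mul fun a b => ?_
    rw [Real.dist_eq, dist_eq_norm, abs_sub_le_iff]
    simp only [NNReal.coe_one, one_mul]
    exact ⟨key a b, by rw [norm_sub_rev]; exact key b a⟩
  exact this.continuous

end
end Stmt11

/-- Let `A` be a Banach `*`-algebra and `I` a `*`-ideal of
`A`, not necessarily closed.  Then any `C*`-seminorm on `I` extends to a
`C*`-seminorm on `A`, and if `I` is dense the extension is unique. -/
theorem stmt_11 {A : Type*} [NonUnitalNormedRing A] [NormedSpace ℂ A]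
    [CompleteSpace A] [StarRing A] [NormedStarGroup A] [StarModule ℂ A]
    [IsScalarTower ℂ A A] [SMulCommClass ℂ A A]
    (I : Set A) (hzero : (0 : A) ∈ I)
    (hadd : ∀ x ∈ I, ∀ y ∈ I, x + y ∈ I)
    (hsmul : ∀ (c : ℂ), ∀ x ∈ I, c • x ∈ I)
    (hstar : ∀ x ∈ I, star x ∈ I)
    (hmull : ∀ (a : A), ∀ x ∈ I, a * x ∈ I)
    (hmulr : ∀ (a : A), ∀ x ∈ I, x * a ∈ I)
    (α : A → ℝ)
    (hα_add : ∀ x ∈ I, ∀ y ∈ I, α (x + y) ≤ α x + α y)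
    (hα_smul : ∀ (c : ℂ), ∀ x ∈ I, α (c • x) = ‖c‖ * α x)
    (hα_mul : ∀ x ∈ I, ∀ y ∈ I, α (x * y) ≤ α x * α y)
    (hα_star : ∀ x ∈ I, α (star x * x) = (α x) ^ 2) :
    (∃ β : A → ℝ, IsCStarSeminormAlg β ∧ ∀ x ∈ I, β x = α x) ∧
    (Dense I → ∀ β β' : A → ℝ, IsCStarSeminormAlg β → (∀ x ∈ I, β x = α x) →
      IsCStarSeminormAlg β' → (∀ x ∈ I, β' x = α x) → β = β') := by
  have H : Stmt11.CSI I α := ⟨hzero, hadd, hsmul, hstar, hmull, hmulr, hα_add, hα_smul, hα_mul,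
    hα_star⟩
  refine ⟨⟨Stmt11.ext I α, H.ext_isCStar, fun x hx => H.ext_eq hx⟩, ?_⟩
  intro hd β β' hβ hβI hβ' hβI'
  exact Continuous.ext_on hd (Stmt11.cont hβ) (Stmt11.cont hβ') fun x hx => by
    rw [hβI x hx, hβI' x hx]
end
end

section
/- Let I be a *-ideal (not necessarily closed) of a C*-algebra A. Then the unique C*-norm on I is the restriction to I of the norm of A; that is, if γ is a C*-norm on I then γ(a) = ‖a‖ for all a ∈ I. -/
noncomputable section

open scoped ComplexConjugate

lemma aux_unital {V : Type*} [NormedRing V] [NormedAlgebra ℂ V] (h : V) (r : ℝ) (hr : 0 ≤ r)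
    (hu : ∀ z : ℂ, r < ‖z‖ → IsUnit (algebraMap ℂ V z - h))
    (hp : ∀ n : ℕ, ‖h ^ (2 ^ n)‖ = ‖h‖ ^ (2 ^ n)) : ‖h‖ ≤ r := by
  letI : NormedAlgebra ℂ (UniformSpace.Completion V) := { norm_smul_le := norm_smul_le }
  let φ : V →+* UniformSpace.Completion V := UniformSpace.Completion.coeRingHom
  have hφ : ∀ x, ‖φ x‖ = ‖x‖ := fun x => UniformSpace.Completion.norm_coe x
  have hsr : spectralRadius ℂ (φ h) ≤ ENNReal.ofReal r := by
    refine iSup₂_le fun z hz => ?_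
    by_contra hlt
    have hzz : ((‖z‖₊ : NNReal) : ENNReal) = ENNReal.ofReal ‖z‖ := by
      rw [← coe_nnnorm, ENNReal.ofReal_coe_nnreal]
    rw [not_le, hzz, ENNReal.ofReal_lt_ofReal_iff_of_nonneg hr] at hlt
    apply hz
    have h1 := (hu z hlt).map φ
    rw [map_sub] at h1
    exact h1
  have ht := spectrum.pow_norm_pow_one_div_tendsto_nhds_spectralRadius (φ h)
  have h2 : Filter.Tendsto (fun n : ℕ => 2 ^ n) Filter.atTop Filter.atTop :=
    tendsto_pow_atTop_atTop_of_one_lt (by norm_num : 1 < 2)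
  have ht2 := ht.comp h2
  have hc : ((fun n : ℕ => ENNReal.ofReal (‖φ h ^ n‖ ^ (1 / (n:ℝ)))) ∘ fun n : ℕ => 2 ^ n)
      = fun _ => ENNReal.ofReal ‖h‖ := by
    funext n
    simp only [Function.comp]
    rw [← map_pow, hφ, hp, one_div, Real.pow_rpow_inv_natCast (norm_nonneg _) (by positivity)]
  rw [hc] at ht2
  have := tendsto_nhds_unique ht2 tendsto_const_nhds
  rw [this] at hsr
  exact (ENNReal.ofReal_le_ofReal_iff hr).1 hsr

lemma aux_nonunital {J : Type*} [NonUnitalNormedRing J] [NormedSpace ℂ J] [IsScalarTower ℂ J J]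
    [SMulCommClass ℂ J J] (h : J) (r : ℝ) (hr : 0 ≤ r)
    (hu : ∀ z : ℂ, r < ‖z‖ → ∃ q : J, z • q = h + h * q ∧ h * q = q * h)
    (s : ℕ → J) (hs0 : s 0 = h) (hs : ∀ n, s (n + 1) = s n * s n)
    (hp : ∀ n : ℕ, ‖s n‖ = ‖h‖ ^ (2 ^ n)) : ‖h‖ ≤ r := by
  let ι : J → WithLp 1 (Unitization ℂ J) := fun x => WithLp.toLp 1 (x : Unitization ℂ J)
  have hι : ∀ x, ‖ι x‖ = ‖x‖ := fun x => WithLp.unitization_norm_inr x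
  have hmul : ∀ x y, ι (x * y) = ι x * ι y := fun x y => by
    apply WithLp.ofLp_injective
    simp [ι, WithLp.unitization_mul]
  have hadd : ∀ x y, ι (x + y) = ι x + ι y := fun x y => by
    apply WithLp.ofLp_injective
    simp [ι]
  have hsmul : ∀ (z : ℂ) x, ι (z • x) = algebraMap ℂ _ z * ι x := fun z x => by
    rw [← Algebra.smul_def]
    apply WithLp.ofLp_injective
    simp [ι]
  have hpow : ∀ n, ι (s n) = ι h ^ (2 ^ n) := by
    intro n
    induction n with
    | zero => simp [hs0]
    | succ n ih => rw [hs, hmul, ih, ← pow_add, pow_succ 2 n, mul_two]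
  rw [← hι]
  refine aux_unital (ι h) r hr ?_ ?_
  · intro z hz
    obtain ⟨q, hq, hqc⟩ := hu z hz
    have hz0 : z ≠ 0 := norm_pos_iff.1 (hr.trans_lt hz)
    have e1 := congrArg ι hq
    rw [hsmul, hadd, hmul] at e1
    have e2 := congrArg ι hqc
    rw [hmul, hmul] at e2
    have hcm := Algebra.commutes z (ι q)
    have hzu : IsUnit (algebraMap ℂ (WithLp 1 (Unitization ℂ J)) z) :=
      (IsUnit.mk0 z hz0).map _
    have p1 : (algebraMap ℂ _ z - ι h) * (1 + ι q) = algebraMap ℂ _ z := by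
      rw [sub_mul, mul_add, mul_add, e1]; simp
    have p2 : (1 + ι q) * (algebraMap ℂ _ z - ι h) = algebraMap ℂ _ z := by
      rw [mul_sub, add_mul, add_mul, ← hcm, e1, ← e2]; simp
    have c : Commute (algebraMap ℂ _ z - ι h) (1 + ι q) := p1.trans p2.symm
    exact (c.isUnit_mul_iff.1 (by rw [p1]; exact hzu)).1
  · intro n
    rw [← hpow, hι, hι, hp]

lemma aux_gamma {J : Type*} [NonUnitalRing J] [Module ℂ J] [IsScalarTower ℂ J J]
    [SMulCommClass ℂ J J] (γ : J → ℝ)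
    (hγ_add : ∀ x y, γ (x + y) ≤ γ x + γ y)
    (hγ_smul : ∀ (c : ℂ) x, γ (c • x) = ‖c‖ * γ x)
    (hγ_mul : ∀ x y, γ (x * y) ≤ γ x * γ y)
    (hγ_nonneg : ∀ x, 0 ≤ γ x)
    (hγ_norm : ∀ x, γ x = 0 → x = 0) (h : J) (r : ℝ) (hr : 0 ≤ r)
    (hu : ∀ z : ℂ, r < ‖z‖ → ∃ q : J, z • q = h + h * q ∧ h * q = q * h)
    (s : ℕ → J) (hs0 : s 0 = h) (hs : ∀ n, s (n + 1) = s n * s n)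
    (hp : ∀ n : ℕ, γ (s n) = γ h ^ (2 ^ n)) : γ h ≤ r := by
  letI : Norm J := ⟨γ⟩
  have core : NormedSpace.Core ℂ J :=
    { norm_nonneg := hγ_nonneg
      norm_smul := hγ_smul
      norm_triangle := hγ_add
      norm_eq_zero_iff := fun x => ⟨hγ_norm x, fun hx => by
        have := hγ_smul 0 0
        rw [hx]; change γ 0 = 0; simpa using this⟩ }
  letI N : NormedAddCommGroup J := NormedAddCommGroup.ofCore core
  letI R : NonUnitalNormedRing J :=
    { N, (inferInstance : NonUnitalRing J) with norm_mul_le := hγ_mul }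
  letI : NormedSpace ℂ J := { norm_smul_le := fun c x => (hγ_smul c x).le }
  exact aux_nonunital h r hr hu s hs0 hs hp

lemma aux_quasi {A : Type*} [NonUnitalCStarAlgebra A] (h : A) (hh : IsSelfAdjoint h) (z : ℂ)
    (hz : ‖h‖ < ‖z‖) : ∃ q : A, z • q = h + h * q ∧ h * q = q * h := by
  have hn : IsStarNormal h := hh.isStarNormal
  have hz0 : z ≠ 0 := norm_pos_iff.1 ((norm_nonneg _).trans_lt hz)
  have hne : ∀ t ∈ quasispectrum ℂ h, z - t ≠ 0 := by
    intro t ht h0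
    have h1 : ‖t‖ ≤ ‖h‖ := by
      have := norm_apply_le_norm_cfcₙ (fun x : ℂ => x) h ht
      rwa [cfcₙ_id' ℂ h] at this
    rw [sub_eq_zero.1 h0] at hz
    exact absurd hz (not_lt.2 h1)
  have hc : ContinuousOn (fun t : ℂ => t / (z - t)) (quasispectrum ℂ h) :=
    continuousOn_id.div (continuousOn_const.sub continuousOn_id) hne
  refine ⟨cfcₙ (fun t : ℂ => t / (z - t)) h, ?_, ?_⟩
  · have e : h * cfcₙ (fun t : ℂ => t / (z - t)) h = cfcₙ (fun t : ℂ => t * (t / (z - t))) h := by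
      rw [cfcₙ_mul (fun t : ℂ => t) (fun t : ℂ => t / (z - t)) h (by fun_prop) rfl hc (by simp),
        cfcₙ_id' ℂ h]
    have hc2 : ContinuousOn (fun t : ℂ => t * (t / (z - t))) (quasispectrum ℂ h) :=
      continuousOn_id.mul hc
    rw [e, ← cfcₙ_smul z _ h hc (by simp)]
    conv_rhs => enter [1]; rw [← cfcₙ_id' ℂ h]
    rw [← cfcₙ_add (fun t : ℂ => t) _ h (by fun_prop) rfl hc2 (by simp)]
    refine cfcₙ_congr fun t ht => ?_
    have := hne t ht
    simp only [smul_eq_mul]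
    field_simp
    ring
  · have := cfcₙ_commute_cfcₙ (fun t : ℂ => t) (fun t : ℂ => t / (z - t)) h
    rw [cfcₙ_id' ℂ h] at this
    exact this

lemma aux_trunc {A : Type*} [NonUnitalCStarAlgebra A] (b : A) (hb : IsSelfAdjoint b) (s : ℝ)
    (hs : 0 < s) (hsb : s < ‖b‖) :
    ∃ w k : A, ‖w‖ ≤ s⁻¹ ∧ b * w = w * b ∧ b * (w * k) = k ∧ k ≠ 0 := by
  let f : ℝ → ℝ := fun t => max (|t| - s) 0
  let g : ℝ → ℝ := fun t => t / max (t ^ 2) (s ^ 2)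
  have hpos : ∀ t : ℝ, 0 < max (t ^ 2) (s ^ 2) := fun t => lt_max_of_lt_right (by positivity)
  have hf : Continuous f := by fun_prop
  have hg : Continuous g :=
    continuous_id.div (by fun_prop) fun t => (hpos t).ne'
  have hf0 : f 0 = 0 := by simp [f, hs.le]
  have hg0 : g 0 = 0 := by simp [g]
  have hbid : cfcₙ (fun t : ℝ => t) b = b := cfcₙ_id' ℝ b
  refine ⟨cfcₙ g b, cfcₙ f b, ?_, ?_, ?_, ?_⟩
  · refine norm_cfcₙ_le fun t _ => ?_
    rw [Real.norm_eq_abs, abs_div, abs_of_pos (hpos t), div_le_iff₀ (hpos t), inv_mul_eq_div,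
      le_div_iff₀ hs]
    rcases le_total |t| s with h | h
    · refine le_trans ?_ (le_max_right _ _)
      nlinarith
    · refine le_trans ?_ (le_max_left _ _)
      rw [← sq_abs]
      nlinarith [abs_nonneg t]
  · have := cfcₙ_commute_cfcₙ (fun t : ℝ => t) g b
    rw [hbid] at this
    exact this
  · rw [← cfcₙ_mul g f b hg.continuousOn hg0 hf.continuousOn hf0]
    conv_lhs => enter [1]; rw [← hbid]
    rw [← cfcₙ_mul (fun t : ℝ => t) (fun t => g t * f t) b (by fun_prop) rfl (hg.mul hf).continuousOn (by simp [hf0])]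
    refine cfcₙ_congr fun t _ => ?_
    simp only [f, g]
    rcases le_total |t| s with h | h
    · rw [max_eq_right (a := |t| - s) (by linarith)]; simp
    · have h2 : s ^ 2 ≤ t ^ 2 := by rw [← sq_abs t]; gcongr
      have ht : t ≠ 0 := by rintro rfl; simp at h; linarith
      rw [max_eq_left h2]
      field_simp
  · intro hk
    have hz : cfcₙ f b = cfcₙ (fun _ : ℝ => (0 : ℝ)) b := by rw [hk]; simp
    rw [cfcₙ_eq_cfcₙ_iff_eqOn hb hf.continuousOn hf0 (by fun_prop) rfl] at hz
    have : ‖cfcₙ (fun t : ℝ => t) b‖ ≤ s := norm_cfcₙ_le fun t ht => by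
      have h1 : max (|t| - s) 0 = 0 := hz ht
      have := le_max_left (|t| - s) 0
      rw [Real.norm_eq_abs]; linarith
    rw [hbid] at this
    linarith

/-- Let `I` be a (not necessarily closed) `*`-ideal of a
`C*`-algebra `A`.  Then the unique `C*`-norm on `I` is the restriction of the
norm of `A`: if `γ` is a `C*`-norm on `I`, then `γ(a) = ‖a‖` for all `a ∈ I`. -/
theorem stmt_12 {A : Type*} [NonUnitalNormedRing A] [NormedSpace ℂ A]
    [CompleteSpace A] [StarRing A] [CStarRing A] [StarModule ℂ A]
    [IsScalarTower ℂ A A] [SMulCommClass ℂ A A]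
    (I : Set A) (hzero : (0 : A) ∈ I)
    (hadd : ∀ x ∈ I, ∀ y ∈ I, x + y ∈ I)
    (hsmul : ∀ (c : ℂ), ∀ x ∈ I, c • x ∈ I)
    (hstar : ∀ x ∈ I, star x ∈ I)
    (hmull : ∀ (a : A), ∀ x ∈ I, a * x ∈ I)
    (hmulr : ∀ (a : A), ∀ x ∈ I, x * a ∈ I)
    (γ : A → ℝ)
    (hγ_add : ∀ x ∈ I, ∀ y ∈ I, γ (x + y) ≤ γ x + γ y)
    (hγ_smul : ∀ (c : ℂ), ∀ x ∈ I, γ (c • x) = ‖c‖ * γ x)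
    (hγ_mul : ∀ x ∈ I, ∀ y ∈ I, γ (x * y) ≤ γ x * γ y)
    (hγ_star : ∀ x ∈ I, γ (star x * x) = (γ x) ^ 2)
    (hγ_norm : ∀ x ∈ I, γ x = 0 → x = 0) :
    ∀ a ∈ I, γ a = ‖a‖ := by
  letI : NonUnitalCStarAlgebra A := {}
  have hnn : ∀ x ∈ I, 0 ≤ γ x := by
    intro x hx
    have h1 := hγ_add x hx ((-1 : ℂ) • x) (hsmul _ x hx)
    have h2 := hγ_smul 0 x hx
    rw [hγ_smul _ x hx] at h1
    simp at h1 h2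
    rw [h2] at h1
    linarith
  have hsa : ∀ h ∈ I, IsSelfAdjoint h → γ h ≤ ‖h‖ := by
    intro h hh hsa
    let S : NonUnitalSubalgebra ℂ A :=
      { carrier := I
        add_mem' := fun {x y} hx hy => hadd x hx y hy
        zero_mem' := hzero
        mul_mem' := fun {x y} _ hy => hmull x y hy
        smul_mem' := fun c x hx => hsmul c x hx }
    let s : ℕ → S := fun n => Nat.rec ⟨h, hh⟩ (fun _ x => x * x) n
    have hs : ∀ n, s (n + 1) = s n * s n := fun n => rfl
    have hself : ∀ n : ℕ, IsSelfAdjoint (s n).1 := by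
      intro n
      induction n with
      | zero => exact hsa
      | succ n ih =>
        rw [hs]
        have e : ((s n * s n : S) : A) = (s n).1 * (s n).1 := rfl
        rw [e, IsSelfAdjoint, star_mul, ih.star_eq]
    refine aux_gamma (J := S) (fun x => γ x) (fun x y => hγ_add x x.2 y y.2)
      (fun c x => hγ_smul c x x.2) (fun x y => hγ_mul x x.2 y y.2) (fun x => hnn x x.2)
      (fun x hx => Subtype.ext (hγ_norm x x.2 hx)) ⟨h, hh⟩ ‖h‖ (norm_nonneg _) ?_ s rfl hs ?_
    · intro z hz
      obtain ⟨q, hq, hc⟩ := aux_quasi h hsa z hz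
      have hz0 : z ≠ 0 := norm_pos_iff.1 ((norm_nonneg _).trans_lt hz)
      have hqI : q ∈ I := by
        have : q = z⁻¹ • (h + h * q) := by rw [← hq, smul_smul, inv_mul_cancel₀ hz0, one_smul]
        rw [this]
        exact hsmul _ _ (hadd _ hh _ (hmulr _ _ hh))
      exact ⟨⟨q, hqI⟩, Subtype.ext hq, Subtype.ext hc⟩
    · intro n
      induction n with
      | zero => simp [s]
      | succ n ih =>
        have h1 := hγ_star (s n).1 (s n).2
        rw [(hself n).star_eq] at h1
        rw [hs]
        change γ ((s n).1 * (s n).1) = _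
        rw [h1]
        simp only at ih
        rw [ih, ← pow_mul, pow_succ 2 n]
  have hup : ∀ a ∈ I, γ a ≤ ‖a‖ := by
    intro a ha
    have h1 := hsa (star a * a) (hmull _ _ ha) (IsSelfAdjoint.star_mul_self a)
    rw [hγ_star a ha, CStarRing.norm_star_mul_self, ← sq] at h1
    exact (sq_le_sq₀ (hnn a ha) (norm_nonneg a)).1 h1
  intro a ha
  refine le_antisymm (hup a ha) ?_
  have hbI : star a * a ∈ I := hmull _ _ ha
  have hlow : ‖star a * a‖ ≤ γ (star a * a) := by
    by_contra hlt
    rw [not_le] at hlt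
    obtain ⟨s, hs1, hs2⟩ := exists_between hlt
    generalize hbdef : star a * a = b at *
    have hb : IsSelfAdjoint b := hbdef ▸ IsSelfAdjoint.star_mul_self a
    have hg0 := hnn b hbI
    have hs : 0 < s := hg0.trans_lt hs1
    obtain ⟨w, k, hw, hbw, hk, hk0⟩ := aux_trunc b hb s hs hs2
    have key : ∀ n : ℕ, ∀ x : A, b * (w * x) = x → γ x ≤ (γ b * s⁻¹) ^ n * ‖x‖ := by
      intro n
      induction n with
      | zero =>
        intro x hx
        have hxI : x ∈ I := hx ▸ hmulr _ _ hbI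
        simpa using hup x hxI
      | succ n ih =>
        intro x hx
        have hxI : x ∈ I := hx ▸ hmulr _ _ hbI
        have hwx : b * (w * (w * x)) = w * x := by
          rw [← mul_assoc, hbw, mul_assoc, hx]
        calc γ x = γ (b * (w * x)) := by rw [hx]
          _ ≤ γ b * γ (w * x) := hγ_mul _ hbI _ (hmull _ _ hxI)
          _ ≤ γ b * ((γ b * s⁻¹) ^ n * ‖w * x‖) := by gcongr; exact ih _ hwx
          _ ≤ γ b * ((γ b * s⁻¹) ^ n * (s⁻¹ * ‖x‖)) := by
            gcongr
            exact (norm_mul_le _ _).trans (by gcongr)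
          _ = _ := by ring
    have hkI : k ∈ I := hk ▸ hmulr _ _ hbI
    have hlim : Filter.Tendsto (fun n : ℕ => (γ b * s⁻¹) ^ n * ‖k‖) Filter.atTop (nhds (0 * ‖k‖)) :=
      (tendsto_pow_atTop_nhds_zero_of_lt_one (by positivity)
        (by rw [← div_eq_mul_inv, div_lt_one hs]; exact hs1)).mul_const _
    have hle := ge_of_tendsto' hlim fun n => key n k hk
    rw [zero_mul] at hle
    exact hk0 (hγ_norm k hkI (le_antisymm hle (hnn k hkI)))
  rw [hγ_star a ha, CStarRing.norm_star_mul_self, ← sq] at hlow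
  exact (sq_le_sq₀ (norm_nonneg a) (hnn a ha)).1 hlow
end
end

section
/- Let A be an admissible Banach *-algebra and I a dense *-ideal of A, not necessarily closed. Then any C*-norm on I can be uniquely extended to a C*-norm on A. -/
noncomputable section

open scoped ComplexConjugate

section helpers
variable {A : Type*} [NonUnitalNormedRing A] [NormedSpace ℂ A]
    [CompleteSpace A] [StarRing A] [NormedStarGroup A] [StarModule ℂ A]
    [IsScalarTower ℂ A A] [SMulCommClass ℂ A A]

lemma aux_sqrt (a : A) (ha : star a = a) (hn : ‖a‖ < 1) :
    ∃ u : A, star u = u ∧ u * a = a * u ∧ u + u - u * u = a * a := by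
  set r : ℝ := ‖a‖ with hr
  have hr0 : 0 ≤ r := norm_nonneg a
  let S : Set A := {u | star u = u ∧ u * a = a * u ∧ ‖u‖ ≤ r}
  have hSc : IsClosed S := by
    refine IsClosed.inter (isClosed_eq continuous_star continuous_id) (IsClosed.inter ?_ ?_)
    · exact isClosed_eq (by fun_prop) (by fun_prop)
    · exact isClosed_le continuous_norm continuous_const
  let f : A → A := fun u => (2⁻¹ : ℂ) • (a * a + u * u)
  have hh : ‖(2⁻¹ : ℂ)‖ = 1 / 2 := by norm_num
  have hmaps : Set.MapsTo f S S := by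
    rintro u ⟨h1, h2, h3⟩
    refine ⟨?_, ?_, ?_⟩
    · simp only [f, star_smul, star_add, star_mul, h1, ha]
      simp
    · simp only [f, smul_mul_assoc, mul_smul_comm, add_mul, mul_add]
      rw [mul_assoc a a a, mul_assoc u u a, h2, ← mul_assoc u a u, h2, mul_assoc a u u]
    · simp only [f]
      rw [norm_smul, hh]
      have e1 : ‖a * a‖ ≤ r * r := norm_mul_le a a
      have e2 : ‖u * u‖ ≤ ‖u‖ * ‖u‖ := norm_mul_le u u
      have e3 := norm_add_le (a * a) (u * u)
      have e4 := norm_nonneg u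
      nlinarith
  have hL : LipschitzOnWith ⟨r, hr0⟩ f S := by
    refine LipschitzOnWith.of_dist_le_mul ?_
    rintro u ⟨-, -, hu⟩ v ⟨-, -, hv⟩
    rw [dist_eq_norm, dist_eq_norm]
    have e : f u - f v = (2⁻¹ : ℂ) • (u * (u - v) + (u - v) * v) := by
      simp only [f, ← smul_sub]
      congr 1
      noncomm_ring
    rw [e, norm_smul, hh]
    have e1 := norm_add_le (u * (u - v)) ((u - v) * v)
    have e2 := norm_mul_le u (u - v)
    have e3 := norm_mul_le (u - v) v
    have e4 := norm_nonneg (u - v)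
    change _ ≤ r * _
    nlinarith
  have hC : ContractingWith ⟨r, hr0⟩ (hmaps.restrict f S S) :=
    ⟨hn, hL.mapsToRestrict hmaps⟩
  have h0 : (0 : A) ∈ S := ⟨by simp, by simp, by simpa using hr0⟩
  obtain ⟨u, hu, hfix, -⟩ := hC.exists_fixedPoint' hSc.isComplete hmaps h0 (edist_ne_top _ _)
  refine ⟨u, hu.1, hu.2.1, ?_⟩
  have hf : (2⁻¹ : ℂ) • (a * a + u * u) = u := hfix
  have h2 : (2 : ℂ) • u = a * a + u * u := by
    rw [← hf, smul_smul, hf]; norm_num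
  rw [← two_smul ℂ u, h2]
  abel

lemma aux_bound (I : Set A) (hzero : (0 : A) ∈ I)
    (hadd : ∀ x ∈ I, ∀ y ∈ I, x + y ∈ I)
    (hsmul : ∀ (c : ℂ), ∀ x ∈ I, c • x ∈ I)
    (hstar : ∀ x ∈ I, star x ∈ I)
    (hmull : ∀ (a : A), ∀ x ∈ I, a * x ∈ I)
    (γ : A → ℝ)
    (hγ_add : ∀ x ∈ I, ∀ y ∈ I, γ (x + y) ≤ γ x + γ y)
    (hγ_smul : ∀ (c : ℂ), ∀ x ∈ I, γ (c • x) = ‖c‖ * γ x)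
    (hγ_mul : ∀ x ∈ I, ∀ y ∈ I, γ (x * y) ≤ γ x * γ y)
    (hγ_star : ∀ x ∈ I, γ (star x * x) = (γ x) ^ 2) :
    LipschitzOnWith 1 γ I ∧ ∀ x ∈ I, 0 ≤ γ x := by
  have g0 : γ 0 = 0 := by simpa using hγ_smul 0 0 hzero
  have hneg : ∀ x ∈ I, -x ∈ I := fun x hx => by simpa using hsmul (-1) x hx
  have gneg : ∀ x ∈ I, γ (-x) = γ x := fun x hx => by simpa using hγ_smul (-1) x hx
  have gpos : ∀ x ∈ I, 0 ≤ γ x := fun x hx => by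
    have := hγ_add x hx (-x) (hneg x hx)
    rw [gneg x hx, add_neg_cancel, g0] at this
    linarith
  have gs1 : ∀ x ∈ I, γ x ≤ γ (star x) := fun x hx => by
    have h1 := hγ_mul (star x) (hstar x hx) x hx
    rw [hγ_star x hx] at h1
    have h2 := gpos x hx
    have h3 := gpos _ (hstar x hx)
    by_contra! h
    nlinarith
  have gs : ∀ x ∈ I, γ (star x) = γ x := fun x hx =>
    le_antisymm (by simpa using gs1 (star x) (hstar x hx)) (gs1 x hx)
  have key : ∀ a ∈ I, star a = a → ‖a‖ < 1 → γ a ≤ 1 := by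
    intro a ha hsa hn
    obtain ⟨u, hu, hua, huu⟩ := aux_sqrt a hsa hn
    set v : A := a - u * a with hv
    have hvI : v ∈ I := by
      rw [hv, sub_eq_add_neg]; exact hadd _ ha _ (hneg _ (hmull u a ha))
    have hvs : star v = v := by simp [hv, hu, hsa, hua]
    have haa : a * a ∈ I := hmull a a ha
    have hva : v * a = a * v := by
      simp only [hv, sub_mul, mul_sub]; rw [hua, mul_assoc, hua]
    have hvv : v * v = a * a - (a * a) * (a * a) := by
      have e1 : v * v = a * a - (u + u - u * u) * (a * a) := by
        have : a * u = u * a := hua.symm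
        have h1 : a * (u * a) = u * (a * a) := by rw [← mul_assoc, this, mul_assoc]
        have h2 : (u * a) * (u * a) = (u * u) * (a * a) := by
          rw [mul_assoc, h1, ← mul_assoc]
        simp only [hv, sub_mul, mul_sub, add_mul]
        rw [h1, h2, mul_assoc u a a]
        abel
      rw [e1, huu]
    set w : A := a * a + Complex.I • v with hw
    have hwI : w ∈ I := hadd _ haa _ (hsmul _ _ hvI)
    have hws : star w = a * a - Complex.I • v := by
      simp [hw, hsa, hvs, sub_eq_add_neg]
    have hww : star w * w = a * a := by
      rw [hws, hw]
      have h1 : v * (a * a) = (a * a) * v := by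
        rw [← mul_assoc, hva, mul_assoc, hva, mul_assoc]
      simp only [sub_mul, mul_add, smul_mul_assoc, mul_smul_comm]
      rw [h1, hvv]
      rw [smul_sub Complex.I (a * a * v), smul_smul, Complex.I_mul_I, neg_one_smul]
      abel
    have e1 : γ w ^ 2 = γ a ^ 2 := by
      rw [← hγ_star w hwI, hww, ← hγ_star a ha, hsa]
    have e2 : γ w = γ a := by
      have := gpos w hwI
      have := gpos a ha
      exact (pow_left_inj₀ (gpos w hwI) (gpos a ha) two_ne_zero).1 e1
    have e3 : w + star w = (2 : ℂ) • (a * a) := by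
      rw [hws, hw, two_smul]; abel
    have e4 := hγ_add w hwI _ (hstar w hwI)
    rw [e3, hγ_smul _ _ haa, gs w hwI, e2] at e4
    have e5 := hγ_star a ha
    rw [hsa] at e5
    rw [e5] at e4
    norm_num at e4
    have := gpos a ha
    by_contra! h
    nlinarith
  have key2 : ∀ a ∈ I, star a = a → γ a ≤ ‖a‖ := by
    intro a ha hsa
    refine le_of_forall_gt_imp_ge_of_dense ?_
    intro t ht
    have ht0 : 0 < t := lt_of_le_of_lt (norm_nonneg a) ht
    have hnt : ‖((t⁻¹ : ℝ) : ℂ)‖ = t⁻¹ := by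
      rw [Complex.norm_real, Real.norm_of_nonneg (by positivity)]
    have := key (((t⁻¹ : ℝ) : ℂ) • a) (hsmul _ _ ha)
      (by rw [star_smul, hsa]; congr 1; exact Complex.conj_ofReal _)
      (by rw [norm_smul, hnt, inv_mul_lt_iff₀ ht0]; simpa using ht)
    rw [hγ_smul _ _ ha, hnt, inv_mul_le_iff₀ ht0] at this
    simpa using this
  have key3 : ∀ x ∈ I, γ x ≤ ‖x‖ := by
    intro x hx
    have h1 := key2 (star x * x) (hmull _ x hx) (by simp)
    rw [hγ_star x hx] at h1
    have h2 := norm_mul_le (star x) x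
    rw [norm_star] at h2
    exact le_of_sq_le_sq (by nlinarith) (norm_nonneg x)
  refine ⟨LipschitzOnWith.of_le_add ?_, gpos⟩
  intro x hx y hy
  have hxy : x - y ∈ I := by rw [sub_eq_add_neg]; exact hadd _ hx _ (hneg _ hy)
  have h1 := hγ_add y hy _ hxy
  have h2 := key3 _ hxy
  rw [add_sub_cancel] at h1
  rw [dist_eq_norm]
  linarith

end helpers

/-- Let `A` be an admissible Banach `*`-algebra and `I` a
dense `*`-ideal of `A`, not necessarily closed.  Then any `C*`-norm on `I`
extends uniquely to a `C*`-norm on `A`. -/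
theorem stmt_13 {A : Type*} [NonUnitalNormedRing A] [NormedSpace ℂ A]
    [CompleteSpace A] [StarRing A] [NormedStarGroup A] [StarModule ℂ A]
    [IsScalarTower ℂ A A] [SMulCommClass ℂ A A]
    (hadm : ∀ a : A, star a * a = 0 → a = 0)
    (I : Set A) (hzero : (0 : A) ∈ I) (hdense : Dense I)
    (hadd : ∀ x ∈ I, ∀ y ∈ I, x + y ∈ I)
    (hsmul : ∀ (c : ℂ), ∀ x ∈ I, c • x ∈ I)
    (hstar : ∀ x ∈ I, star x ∈ I)
    (hmull : ∀ (a : A), ∀ x ∈ I, a * x ∈ I)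
    (hmulr : ∀ (a : A), ∀ x ∈ I, x * a ∈ I)
    (γ : A → ℝ)
    (hγ_add : ∀ x ∈ I, ∀ y ∈ I, γ (x + y) ≤ γ x + γ y)
    (hγ_smul : ∀ (c : ℂ), ∀ x ∈ I, γ (c • x) = ‖c‖ * γ x)
    (hγ_mul : ∀ x ∈ I, ∀ y ∈ I, γ (x * y) ≤ γ x * γ y)
    (hγ_star : ∀ x ∈ I, γ (star x * x) = (γ x) ^ 2)
    (hγ_norm : ∀ x ∈ I, γ x = 0 → x = 0) :
    ∃ β : A → ℝ,
      (IsCStarSeminormAlg β ∧ (∀ a : A, β a = 0 → a = 0) ∧ ∀ x ∈ I, β x = γ x) ∧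
      ∀ β' : A → ℝ,
        (IsCStarSeminormAlg β' ∧ (∀ a : A, β' a = 0 → a = 0) ∧
          ∀ x ∈ I, β' x = γ x) → β' = β := by
  obtain ⟨hLip, gpos⟩ := aux_bound I hzero hadd hsmul hstar hmull γ hγ_add hγ_smul hγ_mul hγ_star
  obtain ⟨β, hβL, hβ⟩ := hLip.extend_real
  have hβc : Continuous β := hβL.continuous
  have hβ' : ∀ x ∈ I, β x = γ x := fun x hx => (hβ hx).symm
  have hmul : ∀ a b : A, β (a * b) ≤ β a * β b := by
    intro a b
    refine hdense.induction (P := fun a => β (a * b) ≤ β a * β b) (fun x hx => ?_)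
      (isClosed_le (by fun_prop) (by fun_prop)) a
    refine hdense.induction (P := fun b => β (x * b) ≤ β x * β b) (fun y hy => ?_)
      (isClosed_le (by fun_prop) (by fun_prop)) b
    rw [hβ' _ hx, hβ' _ hy, hβ' _ (hmull x y hy)]
    exact hγ_mul x hx y hy
  refine ⟨β, ⟨⟨?_, ?_, hmul, ?_⟩, ?_, hβ'⟩, ?_⟩
  · intro a b
    refine hdense.induction (P := fun a => β (a + b) ≤ β a + β b) (fun x hx => ?_)
      (isClosed_le (by fun_prop) (by fun_prop)) a
    refine hdense.induction (P := fun b => β (x + b) ≤ β x + β b) (fun y hy => ?_)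
      (isClosed_le (by fun_prop) (by fun_prop)) b
    rw [hβ' _ hx, hβ' _ hy, hβ' _ (hadd x hx y hy)]
    exact hγ_add x hx y hy
  · intro c a
    refine hdense.induction (P := fun a => β (c • a) = ‖c‖ * β a) (fun x hx => ?_)
      (isClosed_eq (by fun_prop) (by fun_prop)) a
    rw [hβ' _ hx, hβ' _ (hsmul c x hx)]
    exact hγ_smul c x hx
  · intro a
    refine hdense.induction (P := fun a => β (star a * a) = β a ^ 2) (fun x hx => ?_)
      (isClosed_eq (by fun_prop) (by fun_prop)) a
    rw [hβ' _ hx, hβ' _ (hmull _ x hx)]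
    exact hγ_star x hx
  · intro a ha
    have h1 : ∀ y ∈ I, a * y = 0 := by
      intro y hy
      have h := hmul a y
      have hI := hmull a y hy
      rw [ha, zero_mul, hβ' _ hI] at h
      exact hγ_norm _ hI (le_antisymm h (gpos _ hI))
    have h2 : a * star a = 0 :=
      hdense.induction (P := fun y => a * y = 0) h1
        (isClosed_eq (by fun_prop) (by fun_prop)) (star a)
    have h3 := hadm (star a) (by simpa using h2)
    simpa using h3
  · rintro β' ⟨⟨h1, h2, h3, h4⟩, -, h6⟩
    obtain ⟨hL, -⟩ := aux_bound (Set.univ : Set A) (Set.mem_univ _) (by simp) (by simp) (by simp)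
      (by simp) β' (fun x _ y _ => h1 x y) (fun c x _ => h2 c x) (fun x _ y _ => h3 x y)
      (fun x _ => h4 x)
    have hc : Continuous β' := (lipschitzOnWith_univ.1 hL).continuous
    exact hc.ext_on hdense hβc (fun x hx => (h6 x hx).trans (hβ' x hx).symm)
end
end

section
/- Let (E, A, ⟨·,·⟩) be a full C*-basic triple. Then for every a in span{⟨x,y⟩ : x,y ∈ E} ⊆ A, one has ‖a‖_A = sup{‖xa‖_E : x ∈ E, ‖x‖_E ≤ 1}; consequently A is the completion of (span{⟨x,y⟩ : x,y ∈ E}, with the operator norm), and ⟨·,·⟩ is determined by continuity from its restriction. -/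
noncomputable section

open scoped ComplexConjugate

variable {E A : Type*} [AddCommGroup E] [Module ℂ E]
    [NonUnitalRing A] [Module ℂ A] [StarRing A]

/-- A `C*`-basic triple: a basic triple in which `A` is a `C*`-algebra, `E`
with the associated ternary product is a `C*`-ternary ring, `E` is a Banach
right `A`-module and the pairing is continuous. -/
structure CStarBasicTriple (E A : Type*) [NormedAddCommGroup E] [NormedSpace ℂ E]
    [NonUnitalNormedRing A] [NormedSpace ℂ A] [StarRing A] [CStarRing A]
    extends BasicTriple E A where
  norm_triple_le : ∀ x y z : E, ‖act x (inner y z)‖ ≤ ‖x‖ * ‖y‖ * ‖z‖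
  norm_triple_self : ∀ x : E, ‖act x (inner x x)‖ = ‖x‖ ^ 3
  norm_act_le : ∀ (x : E) (a : A), ‖act x a‖ ≤ ‖x‖ * ‖a‖
  continuous_inner : Continuous fun p : E × E => inner p.1 p.2

theorem aux_norm_le {E A : Type*} [NormedAddCommGroup E] [NonUnitalCStarAlgebra A]
    (act : E → A → E)
    (hmul : ∀ (x : E) (a b : A), act (act x a) b = act x (a * b))
    (hle : ∀ (x : E) (a : A), ‖act x a‖ ≤ ‖x‖ * ‖a‖)
    (hfaith : ∀ a : A, (∀ x : E, act x a = 0) → a = 0)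
    (h : A) (hsa : IsSelfAdjoint h) (S : ℝ) (hS0 : 0 ≤ S)
    (hS : ∀ x, ‖act x h‖ ≤ S * ‖x‖) : ‖h‖ ≤ S := by
  by_contra! hlt
  obtain ⟨r, hr1, hr2⟩ := exists_between hlt
  have hr0 : 0 < r := lt_of_le_of_lt hS0 hr1
  let k : ℕ → ℝ → ℝ := fun n s => max (|s| - r) 0 * (s ^ n / (max |s| r) ^ (2 * n))
  have hpos : ∀ s : ℝ, 0 < max |s| r := fun s => lt_max_of_lt_right hr0
  have hkc : ∀ n, Continuous (k n) := by
    intro n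
    have : ∀ s : ℝ, (max |s| r) ^ (2 * n) ≠ 0 := fun s => (pow_pos (hpos s) _).ne'
    fun_prop (disch := exact this _)
  have hk0 : ∀ n, k n 0 = 0 := by
    intro n
    simp [k, hr0.le]
  have hrec : ∀ n s, k (n + 1) s * s = k n s := by
    intro n s
    simp only [k]
    rcases le_total |s| r with h1 | h1
    · rw [max_eq_right (by linarith : |s| - r ≤ 0)]; simp
    · rw [max_eq_left h1]
      have hs : s ≠ 0 := by
        rintro rfl
        simp at h1
        linarith
      rw [pow_mul, pow_mul, sq_abs]
      field_simp
      ring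
  have hspec : ∀ s ∈ quasispectrum ℝ h, |s| ≤ ‖h‖ := by
    intro s hs
    have := norm_apply_le_norm_cfcₙ (fun x : ℝ => x) h hs
    simpa [cfcₙ_id' ℝ h] using this
  have hbound : ∀ n, ‖cfcₙ (k n) h‖ ≤ ‖h‖ * (1 / r) ^ n := by
    intro n
    refine norm_cfcₙ_le ?_
    intro s hs
    simp only [k]
    rw [norm_mul, Real.norm_eq_abs, Real.norm_eq_abs, abs_div, abs_pow, abs_pow,
      abs_of_pos (hpos s), abs_of_nonneg (le_max_right _ _)]
    have h1 := hspec s hs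
    gcongr
    · exact max_le (by linarith) (norm_nonneg _)
    · rw [two_mul, pow_add, ← div_div, div_pow, one_pow]
      have : |s| ^ n / (max |s| r) ^ n ≤ 1 := by
        apply div_le_one_of_le₀
        · gcongr
          exact le_max_left _ _
        · exact (pow_pos (hpos s) _).le
      have h3 : 0 < (max |s| r) ^ n := pow_pos (hpos s) _
      calc |s| ^ n / (max |s| r) ^ n / (max |s| r) ^ n ≤ 1 / (max |s| r) ^ n := by gcongr
        _ ≤ 1 / r ^ n := by
          gcongr
          exact le_max_right _ _
  have hcrec : ∀ n, cfcₙ (k (n + 1)) h * h = cfcₙ (k n) h := by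
    intro n
    have e := cfcₙ_mul (R := ℝ) (k (n + 1)) (fun x => x) h (hkc _).continuousOn (hk0 _)
      continuousOn_id rfl
    rw [cfcₙ_id' ℝ h] at e
    rw [← e]
    congr 1
    funext s
    exact hrec n s
  have hstep : ∀ x n, ‖act x (cfcₙ (k 0) h)‖ ≤ S ^ n * ‖act x (cfcₙ (k n) h)‖ := by
    intro x n
    induction n with
    | zero => simp
    | succ n ih =>
      refine ih.trans ?_
      rw [← hcrec n, ← hmul, pow_succ, mul_assoc]
      gcongr
      exact hS _
  have hz : cfcₙ (k 0) h = 0 := by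
    apply hfaith
    intro x
    have hb : ∀ n : ℕ, ‖act x (cfcₙ (k 0) h)‖ ≤ (S / r) ^ n * (‖x‖ * ‖h‖) := by
      intro n
      calc _ ≤ S ^ n * ‖act x (cfcₙ (k n) h)‖ := hstep x n
        _ ≤ S ^ n * (‖x‖ * (‖h‖ * (1 / r) ^ n)) := by
          gcongr
          exact (hle _ _).trans (by gcongr; exact hbound n)
        _ = _ := by rw [div_pow, div_pow]; ring
    have hl : Filter.Tendsto (fun n : ℕ => (S / r) ^ n * (‖x‖ * ‖h‖)) Filter.atTop (nhds 0) := by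
      have := (tendsto_pow_atTop_nhds_zero_of_lt_one (div_nonneg hS0 hr0.le)
        ((div_lt_one hr0).2 hr1)).mul_const (‖x‖ * ‖h‖)
      simpa using this
    exact norm_le_zero_iff.1 (ge_of_tendsto' hl hb)
  have hfin : ‖h‖ ≤ r := by
    have : ‖cfcₙ (fun x : ℝ => x) h‖ ≤ r := by
      refine norm_cfcₙ_le ?_
      intro s hs
      have h1 := norm_apply_le_norm_cfcₙ (k 0) h hs (hkc 0).continuousOn (hk0 0)
      rw [hz, norm_zero, norm_le_zero_iff] at h1
      simp only [k, pow_zero, mul_zero, div_one, mul_one] at h1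
      have := le_max_left (|s| - r) 0
      rw [Real.norm_eq_abs]
      linarith
    rwa [cfcₙ_id' ℝ h] at this
  linarith

/-- Let `(E, A, ⟪·,·⟫)` be a full `C*`-basic triple.  Then
for every `a` in `span{⟪x,y⟫ : x,y ∈ E} ⊆ A` one has
`‖a‖ = sup{‖xa‖ : ‖x‖ ≤ 1}`; consequently (since the span is dense by
fullness), `A` is the completion of the span with the operator norm, and the
pairing is determined by continuity from its restriction. -/
theorem stmt_14 {E A : Type*} [NormedAddCommGroup E] [NormedSpace ℂ E]
    [CompleteSpace E] [NonUnitalNormedRing A] [NormedSpace ℂ A] [StarRing A]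
    [CStarRing A] [CompleteSpace A] [StarModule ℂ A]
    [IsScalarTower ℂ A A] [SMulCommClass ℂ A A]
    (t : CStarBasicTriple E A)
    (hfull : Dense
      ((Submodule.span ℂ {a : A | ∃ x y : E, t.inner x y = a} : Submodule ℂ A) :
        Set A)) :
    ∀ a ∈ Submodule.span ℂ {a : A | ∃ x y : E, t.inner x y = a},
      ‖a‖ = sSup {s : ℝ | ∃ x : E, ‖x‖ ≤ 1 ∧ s = ‖t.act x a‖} := by
  intro a _
  letI : NonUnitalCStarAlgebra A := {}
  have hfaith : ∀ a : A, (∀ x : E, t.act x a = 0) → a = 0 := by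
    intro a ha
    have h1 : ∀ b ∈ Submodule.span ℂ {a : A | ∃ x y : E, t.inner x y = a}, b * a = 0 := by
      intro b hb
      induction hb using Submodule.span_induction with
      | mem b hb =>
        obtain ⟨x, y, rfl⟩ := hb
        rw [t.inner_mul, ha]
        simpa using t.inner_smul_right 0 x 0
      | zero => simp
      | add b c _ _ hb hc => rw [add_mul, hb, hc, add_zero]
      | smul c b _ hb => rw [smul_mul_assoc, hb, smul_zero]
    have h2 : (fun b : A => b * a) = fun _ => 0 :=
      Continuous.ext_on hfull (by fun_prop) (by fun_prop) h1
    exact CStarRing.star_mul_self_eq_zero_iff a |>.1 (congrFun h2 (star a))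
  set T : Set ℝ := {s : ℝ | ∃ x : E, ‖x‖ ≤ 1 ∧ s = ‖t.act x a‖} with hT
  have hub : ∀ s ∈ T, s ≤ ‖a‖ := by
    rintro s ⟨x, hx, rfl⟩
    exact (t.norm_act_le x a).trans (mul_le_of_le_one_left (norm_nonneg _) hx)
  have hbdd : BddAbove T := ⟨‖a‖, hub⟩
  have hne : T.Nonempty := ⟨_, 0, by simp, rfl⟩
  have hS0 : 0 ≤ sSup T := (norm_nonneg _).trans (le_csSup hbdd ⟨0, by simp, rfl⟩)
  have hact0 : ∀ b : A, t.act 0 b = 0 := fun b => by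
    simpa using t.act_smul_left 0 0 b
  have hS : ∀ x, ‖t.act x a‖ ≤ sSup T * ‖x‖ := by
    intro x
    rcases eq_or_ne x 0 with rfl | hx
    · simp [hact0]
    have hx' : 0 < ‖x‖ := norm_pos_iff.2 hx
    have h1 : ‖t.act (((‖x‖⁻¹ : ℝ) : ℂ) • x) a‖ ≤ sSup T := by
      refine le_csSup hbdd ⟨_, ?_, rfl⟩
      rw [norm_smul]
      simp [hx'.ne']
    rw [t.act_smul_left, norm_smul, Complex.norm_real, norm_inv, norm_norm] at h1
    rwa [inv_mul_le_iff₀ hx', mul_comm] at h1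
  refine le_antisymm ?_ (csSup_le hne hub)
  have key := aux_norm_le t.act t.act_mul t.norm_act_le hfaith (star a * a)
    (IsSelfAdjoint.star_mul_self a) (sSup T * ‖a‖) (by positivity) (by
      intro x
      rw [← t.act_mul]
      refine (hS _).trans ?_
      rw [mul_assoc]
      gcongr
      have := t.norm_act_le x (star a)
      rw [norm_star] at this
      linarith)
  rw [CStarRing.norm_star_mul_self] at key
  rcases eq_or_ne a 0 with rfl | ha
  · simpa using hS0
  · exact le_of_mul_le_mul_right key (norm_pos_iff.2 ha)
end
end
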